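/- For every prime number p and every integer g > 1, there exists a two-dimensional standard graded normal Q-Gorenstein domain (R, m) over an algebraically closed field of characteristic p such that the set of F-thresholds of m contains a strictly decreasing infinite sequence; in particular, the set of F-thresholds of an ideal need not satisfy the descending chain condition. -/

import Mathlib

/-!
The ring `R` is the cone over the smooth complete intersection curve
`w ^ (p + 1) = u ^ (p + 1) - v ^ (p + 1)`, `s ^ (p + 1) = u ^ (p + 1) - lam * v ^ (p + 1)`
over the algebraic closure `k` of `𝔽_p(lam)` with `lam` transcendental. It is an iterated cyclic
cover of the plane `k[v][u]`, hence free over it with basis `w ^ i * s ^ j`, two-dimensional, and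
normal because the two branch divisors are reduced (`cyclicCover_normal`, `coneRing_normal`). Being
a complete intersection, it is Gorenstein, and its Hilbert function is eventually linear
(`exists_cone`).

For each `q = p ^ (n + 1)`, the ideal `J` has the generators `u * v ^ p`,
`a * u ^ (p + 1) + b * v ^ (p + 1)` and `w * s`, where `a ^ q = (lam - 1) / (lam ^ q - 1)` and
`b ^ q = 1 - a ^ q`. The point is that their `q`-th powers satisfy a relation of degree
`B = q * (p + 2) - (p - 1)`, slightly less than half of the sum `q * (2 * p + 4)` of their degrees,
and that its coefficients have no common zero on the curve (`relation_exists`). The relation comes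
from forms `f`, `g`, `h`, `l` of degree `q - (p - 1)` with `u ^ q * f - v ^ q * g = w ^ q * h` and
`u ^ q * f - lam * v ^ q * g = s ^ q * l`. These are `u`, `v`, `w`, `s` for `q = p`, and
`syzygyData_step` passes from `q` to `q * p` because `lam ^ q` is different from `1` and `lam`.

Geometrically such a relation is a line subbundle of the `q`-th Frobenius pullback of the syzygy
bundle of `J`, destabilizing it with a line bundle as quotient, so that further Frobenius pullbacks
are controlled. In algebraic terms, counting dimensions in each degree with the Hilbert function
shows which forms lie in `J^[q * q']` for all large `q'` (`count_lower`, `count_upper`), whence the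
threshold of the maximal ideal at `J` is `(q * (2 * p + 4) - B) / q = p + 2 + (p - 1) / q`
(`hasFThreshold_of_relation`, `exists_threshold`). These values strictly decrease with `n`.

The bundle theory that `DescendingChainWitness` asks for is filled by the numerical model
`numericalTheory` of genus `g`. It records ranks and degrees only, and its `h0` is prescribed to be
the Hilbert function of `R` on the powers of the canonical class. It is not the category of bundles
on the curve above, and `g` is unrelated to the genus of that curve.
-/

/-! Common definitions: F-thresholds. -/

open Filter

/-- The Frobenius bracket power `J^{[q]}`. -/
def frobeniusPower {R : Type*} [CommRing R] (J : Ideal R) (q : ℕ) : Ideal R :=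
  Ideal.span ((fun x => x ^ q) '' (J : Set R))

/-- `ν_I^J(q) = max { r | I^r ⊄ J^{[q]} }`. -/
noncomputable def fthresholdNu {R : Type*} [CommRing R] (I J : Ideal R) (q : ℕ) : ℕ :=
  sSup {r : ℕ | ¬ I ^ r ≤ frobeniusPower J q}

/-- `c` is the `F`-threshold `c^J(I) = lim_{e → ∞} ν_I^J(p^e)/p^e`. -/
def HasFThreshold {R : Type*} [CommRing R] (p : ℕ) (I J : Ideal R) (c : ℝ) : Prop :=
  Filter.Tendsto (fun e : ℕ => (fthresholdNu I J (p ^ e) : ℝ) / (p : ℝ) ^ e)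
    Filter.atTop (nhds c)

/-- An abstract theory of vector bundles on a nonsingular projective curve of genus
`genus` over the field `k`, in characteristic `p`. -/
structure CurveBundleTheory (p : ℕ) (k : Type) [Field k] : Type 1 where
  Bundle : Type
  genus : ℕ
  rank : Bundle → ℕ
  deg : Bundle → ℤ
  Sub : Bundle → Bundle → Prop
  Quot : Bundle → Bundle → Bundle
  tensor : Bundle → Bundle → Bundle
  dual : Bundle → Bundle
  det : Bundle → Bundle
  OX : Bundle
  KX : Bundle
  Iso : Bundle → Bundle → Prop
  frob : Bundle → Bundle
  h0 : Bundle → ℕ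
  H1zero : Bundle → Prop
  globallyGenerated : Bundle → Prop
  veryAmple : Bundle → Prop
  rank_pos : ∀ V, 0 < rank V
  rank_OX : rank OX = 1
  deg_OX : deg OX = 0
  rank_KX : rank KX = 1
  deg_KX : deg KX = 2 * (genus : ℤ) - 2
  rank_tensor : ∀ V W, rank (tensor V W) = rank V * rank W
  deg_tensor : ∀ V W, deg (tensor V W) = (rank W : ℤ) * deg V + (rank V : ℤ) * deg W
  rank_dual : ∀ V, rank (dual V) = rank V
  deg_dual : ∀ V, deg (dual V) = - deg V
  rank_det : ∀ V, rank (det V) = 1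
  deg_det : ∀ V, deg (det V) = deg V
  rank_frob : ∀ V, rank (frob V) = rank V
  deg_frob : ∀ V, deg (frob V) = (p : ℤ) * deg V
  sub_rank_lt : ∀ V W, Sub W V → rank W < rank V
  rank_quot : ∀ V W, Sub W V → rank (Quot V W) = rank V - rank W
  deg_quot : ∀ V W, Sub W V → deg (Quot V W) = deg V - deg W
  iso_rank : ∀ V W, Iso V W → rank V = rank W
  iso_deg : ∀ V W, Iso V W → deg V = deg W
  riemannRoch : ∀ V, H1zero V → (h0 V : ℤ) = deg V + (rank V : ℤ) * (1 - (genus : ℤ))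

namespace CurveBundleTheory

variable {p : ℕ} {k : Type} [Field k] (T : CurveBundleTheory p k)

/-- Tensor powers `V^{⊗ n}` (with `V^{⊗ 0} = O_X`). -/
def tpow (V : T.Bundle) : ℕ → T.Bundle
  | 0 => T.OX
  | n + 1 => T.tensor (tpow V n) V

/-- The slope `μ(V) = deg V / rank V`. -/
noncomputable def slope (V : T.Bundle) : ℚ := (T.deg V : ℚ) / (T.rank V : ℚ)

/-- `V` is semistable if `μ(W) ≤ μ(V)` for every subbundle `W ⊆ V`. -/
def Semistable (V : T.Bundle) : Prop := ∀ W, T.Sub W V → T.slope W ≤ T.slope V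

/-- The `m`-th iterated Frobenius pullback `F^{m*}V`. -/
def frobIter (m : ℕ) (V : T.Bundle) : T.Bundle := T.frob^[m] V

/-- `V` is strongly semistable if all its Frobenius pullbacks are semistable. -/
def StronglySemistable (V : T.Bundle) : Prop := ∀ m, T.Semistable (T.frobIter m V)

/-- Slopes of the successive quotients of a filtration `E 1 ⊂ E 2 ⊂ ⋯ ⊂ E n`. -/
noncomputable def hnSlope (E : ℕ → T.Bundle) : ℕ → ℚ
  | 0 => T.slope (E 1)
  | 1 => T.slope (E 1)
  | i + 2 => T.slope (T.Quot (E (i + 2)) (E (i + 1)))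

/-- `0 ⊂ E 1 ⊂ ⋯ ⊂ E n = V` is the Harder–Narasimhan filtration of `V`:
semistable successive quotients with strictly decreasing slopes. -/
def IsHNFiltration (n : ℕ) (E : ℕ → T.Bundle) (V : T.Bundle) : Prop :=
  0 < n ∧ E n = V ∧
  (∀ i, 1 ≤ i → i < n → T.Sub (E i) (E (i + 1))) ∧
  T.Semistable (E 1) ∧
  (∀ i, 1 ≤ i → i < n → T.Semistable (T.Quot (E (i + 1)) (E i))) ∧
  (∀ i, 1 ≤ i → i < n → T.hnSlope E (i + 1) < T.hnSlope E i)

/-- `c = μ_min(V)`, the minimal Harder–Narasimhan slope of `V`. -/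
def IsMuMin (V : T.Bundle) (c : ℚ) : Prop :=
  ∃ n E, T.IsHNFiltration n E V ∧ c = T.hnSlope E n

/-- A Harder–Narasimhan filtration is strong if all its quotients are strongly
semistable. -/
def IsStrongHNFiltration (n : ℕ) (E : ℕ → T.Bundle) (V : T.Bundle) : Prop :=
  T.IsHNFiltration n E V ∧ T.StronglySemistable (E 1) ∧
    ∀ i, 1 ≤ i → i < n → T.StronglySemistable (T.Quot (E (i + 1)) (E i))

/-- `V` has a strong Harder–Narasimhan filtration. -/
def HasStrongHN (V : T.Bundle) : Prop := ∃ n E, T.IsStrongHNFiltration n E V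

/-- `a = a_min(V) = μ_min(F^{m*}V)/p^m` for (any) `m` such that `F^{m*}V` has a
strong Harder–Narasimhan filtration. -/
def IsAMin (V : T.Bundle) (a : ℚ) : Prop :=
  ∃ m n E, T.IsStrongHNFiltration n E (T.frobIter m V) ∧
    a = T.hnSlope E n / (p : ℚ) ^ m

end CurveBundleTheory

/-- `(R, 𝒜)` is the homogeneous coordinate ring (section ring) of the curve underlying
`T` embedded by the very ample line bundle `L`; i.e. `R` is a cone over the curve. -/
def IsSectionRingOf {p : ℕ} {k : Type} [Field k] (T : CurveBundleTheory p k) (L : T.Bundle)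
    {R : Type} [CommRing R] [Algebra k R] (𝒜 : ℕ → Submodule k R) : Prop :=
  T.rank L = 1 ∧ T.veryAmple L ∧ ∀ n, Module.finrank k (𝒜 n) = T.h0 (T.tpow L n)

/-- The cone over a curve polarized by `L` is `ℚ`-Gorenstein exactly when some positive
power of the canonical bundle `K_X` is isomorphic to a positive power of `L`. -/
def QGorensteinCone {p : ℕ} {k : Type} [Field k] (T : CurveBundleTheory p k)
    (L : T.Bundle) : Prop :=
  ∃ a b : ℕ, 0 < a ∧ 0 < b ∧ T.Iso (T.tpow T.KX a) (T.tpow L b)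

/-- Corollary 1.2, second part.  A witness: a two-dimensional standard
graded normal `ℚ`-Gorenstein domain `(R, 𝐦)` over an algebraically closed field of
characteristic `p` such that the set of `F`-thresholds
`{c^J(𝐦) : J ⊆ 𝐦, 𝐦 ⊆ Rad J}` contains a strictly decreasing infinite sequence; in
particular the `F`-thresholds of an ideal need not satisfy the descending chain
condition. -/
structure DescendingChainWitness (p g : ℕ) : Type 2 where
  k : Type
  [fieldInst : Field k]
  [algClosedInst : IsAlgClosed k]
  [charInst : CharP k p]
  R : Type
  [ringInst : CommRing R]
  [domainInst : IsDomain R]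
  [algInst : Algebra k R]
  /-- the grading of `R` -/
  𝒜 : ℕ → Submodule k R
  [gradedInst : GradedAlgebra 𝒜]
  /-- `R` is standard graded: `R₀ = k` … -/
  standard_zero : 𝒜 0 = (1 : Submodule k R)
  /-- … and `R` is generated over `k` by `R₁`. -/
  standard_one : Algebra.adjoin k (𝒜 1 : Set R) = ⊤
  /-- `R` is normal. -/
  normal : IsIntegrallyClosed R
  /-- `R` has dimension two. -/
  dim_two : ringKrullDim R = 2
  /-- the curve `X = Proj R` -/
  T : CurveBundleTheory p k
  /-- the very ample line bundle embedding `X` -/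
  L : T.Bundle
  /-- `X` is nonsingular of genus `g` -/
  genus_eq : T.genus = g
  /-- `R` is the cone over `X` with respect to `L`, i.e. `Proj R = X` -/
  cone : IsSectionRingOf T L 𝒜
  /-- `R` is `ℚ`-Gorenstein -/
  qGorenstein : QGorensteinCone T L
  /-- the graded maximal ideal `𝐦` of `R` -/
  mIdeal : Ideal R
  mIdeal_eq : mIdeal = (HomogeneousIdeal.irrelevant 𝒜).toIdeal
  /-- a strictly decreasing sequence of `F`-thresholds of `𝐦` -/
  seq : ℕ → ℝ
  seq_strictAnti : StrictAnti seq
  seq_is_fthreshold : ∀ n, ∃ J : Ideal R, J ≤ mIdeal ∧ mIdeal ≤ J.radical ∧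
    HasFThreshold p mIdeal J (seq n)

/-! ### Syzygies on the cone -/

namespace FThresholdDCC

section Abstract

variable {k R : Type} [Field k] [CommRing R] [IsDomain R] [Algebra k R]

/-- Depth two: if `u`, `v` is a regular sequence in the radical of `I`, then a principal ideal
containing `α * I` contains `α`. -/
theorem sat_dvd {u v : R} (hv : v ≠ 0)
    (hreg : ∀ (N : ℕ) (a b : R), a * v ^ N = b * u ^ N → v ^ N ∣ b)
    {I : Ideal R} (hu : u ∈ I.radical) (hvI : v ∈ I.radical)
    {γ α : R} (hγ : γ ≠ 0) (h : ∀ x ∈ I, γ ∣ α * x) : γ ∣ α := by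
  obtain ⟨n, hn⟩ := hu
  obtain ⟨m, hm⟩ := hvI
  have h1 : u ^ (n + m) ∈ I := by rw [pow_add]; exact I.mul_mem_right _ hn
  have h2 : v ^ (n + m) ∈ I := by rw [pow_add]; exact I.mul_mem_left _ hm
  obtain ⟨A, hA⟩ := h _ h1
  obtain ⟨B, hB⟩ := h _ h2
  have : A * v ^ (n + m) = B * u ^ (n + m) := by
    apply mul_left_cancel₀ hγ
    linear_combination (-v ^ (n + m)) * hA + u ^ (n+m) * hB
  obtain ⟨c, hc⟩ := hreg _ _ _ this
  refine ⟨c, ?_⟩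
  apply mul_right_cancel₀ (pow_ne_zero (n + m) hv)
  rw [hB, hc]; ring

theorem mem_radical_of_primes {I : Ideal R} {x : R}
    (h : ∀ P : Ideal R, P.IsPrime → I ≤ P → x ∈ P) : x ∈ I.radical := by
  rw [Ideal.radical_eq_sInf, Ideal.mem_sInf]
  intro P hP
  exact h P hP.2 hP.1

variable (𝒜 : ℕ → Submodule k R) [GradedAlgebra 𝒜]

theorem mem_of_mul_mem {m δ : ℕ} {x g : R} (hx : x * g ∈ 𝒜 (m + δ)) (hg : g ∈ 𝒜 δ)
    (hg0 : g ≠ 0) : x ∈ 𝒜 m := by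
  have h1 := DirectSum.coe_decompose_mul_add_of_right_mem 𝒜 (i := m) (a := x) hg
  rw [DirectSum.decompose_of_mem_same 𝒜 hx] at h1
  rw [mul_right_cancel₀ hg0 h1]
  exact SetLike.coe_mem _

theorem const_mul_mem (c : k) {n : ℕ} {x : R} (hx : x ∈ 𝒜 n) : algebraMap k R c * x ∈ 𝒜 n := by
  rw [← Algebra.smul_def]; exact (𝒜 n).smul_mem c hx

theorem pow_mem_one {x : R} (hx : x ∈ 𝒜 1) (n : ℕ) : x ^ n ∈ 𝒜 n := by
  have := SetLike.pow_mem_graded n hx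
  rwa [smul_eq_mul, mul_one] at this

theorem mem_of_const_mul_mem {P : Ideal R} {c : k} (hc : c ≠ 0) {x : R}
    (h : algebraMap k R c * x ∈ P) : x ∈ P := by
  have : x = algebraMap k R c⁻¹ * (algebraMap k R c * x) := by
    rw [← mul_assoc, ← map_mul, inv_mul_cancel₀ hc, map_one, one_mul]
  rw [this]; exact P.mul_mem_left _ h

/-- The part of the geometry of the cone that the syzygy computation uses: a graded domain
containing linear forms `u`, `v`, `w`, `s` with `w ^ (p + 1) = u ^ (p + 1) - v ^ (p + 1)` and
`s ^ (p + 1) = u ^ (p + 1) - lam * v ^ (p + 1)`, in which the powers of `v`, `u` form regular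
sequences. -/
structure ConeForms (p : ℕ) (lam : k) (u v w s : R) : Prop where
  hu : u ∈ 𝒜 1
  hv : v ∈ 𝒜 1
  hw : w ∈ 𝒜 1
  hs : s ∈ 𝒜 1
  u0 : u ≠ 0
  v0 : v ≠ 0
  w0 : w ≠ 0
  s0 : s ≠ 0
  rel_w : w ^ (p + 1) = u ^ (p + 1) - v ^ (p + 1)
  rel_s : s ^ (p + 1) = u ^ (p + 1) - algebraMap k R lam * v ^ (p + 1)
  reg : ∀ (N : ℕ) (a b : R), a * v ^ N = b * u ^ N → v ^ N ∣ b

variable {p : ℕ} {lam : k} {u v w s : R}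

variable {𝒜} in
/-- A prime containing `w` and `s` contains `u` and `v`, because `lam ≠ 1`. -/
theorem ConeForms.uv_mem_of_ws (C : ConeForms 𝒜 p lam u v w s) (hlam : lam ≠ 1)
    (P : Ideal R) [hP : P.IsPrime] (hw : w ∈ P) (hs : s ∈ P) : u ∈ P ∧ v ∈ P := by
  have h1 : w ^ (p + 1) ∈ P := P.pow_mem_of_mem hw _ (Nat.succ_pos p)
  have h2 : s ^ (p + 1) ∈ P := P.pow_mem_of_mem hs _ (Nat.succ_pos p)
  have hc : (lam - 1)⁻¹ * (lam - 1) = 1 := inv_mul_cancel₀ (sub_ne_zero.mpr hlam)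
  have hc' : algebraMap k R (lam - 1)⁻¹ * (algebraMap k R lam - 1) = 1 := by
    rw [← map_one (algebraMap k R), ← map_sub, ← map_mul, hc]
  have hv : v ^ (p + 1) ∈ P := by
    have : v ^ (p + 1) = algebraMap k R (lam - 1)⁻¹ * (w ^ (p + 1) - s ^ (p + 1)) := by
      rw [C.rel_w, C.rel_s]; linear_combination (-v ^ (p + 1)) * hc'
    rw [this]; exact P.mul_mem_left _ (P.sub_mem h1 h2)
  have hu : u ^ (p + 1) ∈ P := by
    have : u ^ (p + 1) = w ^ (p + 1) + v ^ (p + 1) := by rw [C.rel_w]; ring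
    rw [this]; exact P.add_mem h1 hv
  exact ⟨hP.mem_of_pow_mem _ hu, hP.mem_of_pow_mem _ hv⟩

variable {𝒜} in
theorem ConeForms.ws_dvd (C : ConeForms 𝒜 p lam u v w s) (hlam : lam ≠ 1) (m n : ℕ) {x y : R}
    (h : w ^ n * x = s ^ m * y) : s ^ m ∣ x := by
  have key : ∀ P : Ideal R, P.IsPrime → Ideal.span {w ^ n, s ^ m} ≤ P → u ∈ P ∧ v ∈ P := by
    intro P hP hle
    exact C.uv_mem_of_ws hlam P
      (hP.mem_of_pow_mem n (hle (Ideal.subset_span (by simp))))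
      (hP.mem_of_pow_mem m (hle (Ideal.subset_span (by simp))))
  refine sat_dvd C.v0 C.reg (I := Ideal.span {w ^ n, s ^ m})
    (mem_radical_of_primes fun P hP hle => (key P hP hle).1)
    (mem_radical_of_primes fun P hP hle => (key P hP hle).2) (pow_ne_zero _ C.s0) ?_
  intro z hz
  obtain ⟨a, b, rfl⟩ := Ideal.mem_span_pair.mp hz
  exact ⟨a * y + b * x, by linear_combination a * h⟩

variable {𝒜} in
theorem ConeForms.sw_dvd (C : ConeForms 𝒜 p lam u v w s) (hlam : lam ≠ 1) (m n : ℕ) {x y : R}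
    (h : s ^ m * x = w ^ n * y) : w ^ n ∣ x := by
  obtain ⟨c, hc⟩ := C.ws_dvd hlam m n h.symm
  refine ⟨c, ?_⟩
  apply mul_left_cancel₀ (pow_ne_zero m C.s0)
  rw [h, hc]; ring

/-- The syzygy data at level `q`: forms `f`, `g`, `h`, `l` of degree `q - (p - 1)` without
common zero on the curve such that `u ^ q * f - v ^ q * g = w ^ q * h` and
`u ^ q * f - lam * v ^ q * g = s ^ q * l`. -/
structure SyzygyData (p : ℕ) (lam : k) (u v w s : R) (q : ℕ) (f g h l : R) : Prop where
  hf : f ∈ 𝒜 (q - (p - 1))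
  hg : g ∈ 𝒜 (q - (p - 1))
  hh : h ∈ 𝒜 (q - (p - 1))
  hl : l ∈ 𝒜 (q - (p - 1))
  eq_w : u ^ q * f - v ^ q * g = w ^ q * h
  eq_s : u ^ q * f - algebraMap k R lam * v ^ q * g = s ^ q * l
  prime : ∀ P : Ideal R, P.IsPrime → f ∈ P → g ∈ P → h ∈ P → l ∈ P → u ∈ P ∧ v ∈ P

/-- The forms produced by one step of the recursion. The last two equations determine
`f'`; the relation between the generators of the ideals `J` is a consequence of them. -/
theorem syzygyData_step [CharP R p] [hp : Fact p.Prime] (C : ConeForms 𝒜 p lam u v w s)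
    {q e : ℕ} (hq : q = p ^ (e + 1)) (hlam0 : lam ≠ 0) (hlam : lam ≠ 1) (hlq : lam ^ q ≠ 1)
    (hlq' : lam ^ q ≠ lam) {f g h l : R} (D : SyzygyData 𝒜 p lam u v w s q f g h l)
    {a : k} (ha : a * (lam ^ q - 1) = lam - 1) :
    ∃ f' g' h' l' : R, SyzygyData 𝒜 p lam u v w s (q * p) f' g' h' l' ∧
      f' * s ^ q = algebraMap k R a * w ^ (q * p) * g - v ^ (q * p) * h ∧
      f' * w ^ q = algebraMap k R a * s ^ (q * p) * g - v ^ (q * p) * l := by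
  have hpp := hp.out.pos
  have hqp : p ≤ q := by rw [hq, pow_succ]; exact Nat.le_mul_of_pos_left _ (pow_pos hpp _)
  have hq0 : q ≠ 0 := by omega
  set L := algebraMap k R lam with hL
  set Li := algebraMap k R lam⁻¹ with hLi
  set A := algebraMap k R a with hA
  have hLLi : L * Li = 1 := by rw [hL, hLi, ← map_mul, mul_inv_cancel₀ hlam0, map_one]
  have hAr : A * (L ^ q - 1) = L - 1 := by
    rw [hA, hL, ← map_pow, ← map_one (algebraMap k R), ← map_sub, ← map_sub, ← map_mul, ha]
  have a0 : a ≠ 0 := by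
    rintro rfl
    exact hlam (sub_eq_zero.mp (by rw [← ha, zero_mul]))
  have frob : ∀ x y : R, (x - y) ^ q = x ^ q - y ^ q := by
    intro x y; rw [hq]; exact sub_pow_char_pow x y (e + 1)
  have relW : w ^ (q * p) * w ^ q = u ^ (q * p) * u ^ q - v ^ (q * p) * v ^ q := by
    have := congrArg (· ^ q) C.rel_w
    simp only [frob, ← pow_mul] at this
    rw [← pow_add, ← pow_add, ← pow_add]
    convert this using 2 <;> ring
  have relS : s ^ (q * p) * s ^ q = u ^ (q * p) * u ^ q - L ^ q * v ^ (q * p) * v ^ q := by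
    have := congrArg (· ^ q) C.rel_s
    simp only [frob, ← pow_mul, mul_pow] at this
    rw [← pow_add, ← pow_add, mul_assoc, ← pow_add]
    convert this using 2 <;> ring
  have e3 := D.eq_w
  have e4 := D.eq_s
  have ws0 : w ^ q ≠ 0 := pow_ne_zero _ C.w0
  have ss0 : s ^ q ≠ 0 := pow_ne_zero _ C.s0
  obtain ⟨f', hf'⟩ : s ^ q ∣ A * w ^ (q * p) * g - v ^ (q * p) * h := by
    apply C.ws_dvd hlam q q (y := A * s ^ (q * p) * g - v ^ (q * p) * l)
    linear_combination A * g * relW + v^(q*p) * e3 - A * g * relS - v ^ (q*p) * e4 +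
      g * v^(q*p) * v^q * hAr
  have hf'' : f' * w ^ q = A * s ^ (q * p) * g - v ^ (q * p) * l := by
    apply mul_left_cancel₀ ss0
    linear_combination A * g * relW + v^(q*p) * e3 - A * g * relS - v ^ (q*p) * e4 +
      g * v^(q*p) * v^q * hAr - w ^ q * hf'
  obtain ⟨g', hg'⟩ : s ^ q ∣ A * L ^ q * Li * w ^ (q * p) * f - u ^ (q * p) * h := by
    apply C.ws_dvd hlam q q (y := Li * (A * s ^ (q * p) * f - u ^ (q * p) * l))
    linear_combination A * L ^ q * Li * f * relW + u ^ (q * p) * e3 - Li * A * f * relS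
      - Li * u ^ (q * p) * e4 + f * u ^ (q * p) * u ^ q * Li * hAr
      + (f * u ^ (q * p) * u ^ q - u ^ (q * p) * v ^ q * g) * hLLi
  have hg'' : L * g' * w ^ q = A * s ^ (q * p) * f - u ^ (q * p) * l := by
    apply mul_left_cancel₀ ss0
    linear_combination L * (A * L ^ q * Li * f * relW + u ^ (q * p) * e3 - Li * A * f * relS
      - Li * u ^ (q * p) * e4 + f * u ^ (q * p) * u ^ q * Li * hAr
      + (f * u ^ (q * p) * u ^ q - u ^ (q * p) * v ^ q * g) * hLLi) - L * w ^ q * hg'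
      + s ^ q * (A * s ^ (q * p) * f - u ^ (q * p) * l) * hLLi
  obtain ⟨h', hh'⟩ : s ^ q ∣ A * (u ^ (q * p) * g - L ^ q * Li * v ^ (q * p) * f) := by
    apply C.ws_dvd hlam q (q * p) (y := u ^ (q * p) * f' - v ^ (q * p) * g')
    linear_combination u ^ (q*p) * hf' - v ^ (q*p) * hg'
  have hh'' : u ^ (q * p) * f' - v ^ (q * p) * g' = w ^ (q * p) * h' := by
    apply mul_left_cancel₀ ss0
    linear_combination w ^ (q*p) * hh' -u ^ (q*p) * hf' + v ^ (q*p) * hg'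
  obtain ⟨l', hl'⟩ : w ^ q ∣ A * (u ^ (q * p) * g - v ^ (q * p) * f) := by
    apply C.sw_dvd hlam (q * p) q (y := u ^ (q * p) * f' - L * v ^ (q * p) * g')
    linear_combination v ^ (q*p) * hg'' - u ^ (q*p) * hf''
  have hl'' : u ^ (q * p) * f' - L * v ^ (q * p) * g' = s ^ (q * p) * l' := by
    apply mul_left_cancel₀ ws0
    linear_combination s ^ (q*p) * hl' - v ^ (q*p) * hg'' + u ^ (q*p) * hf''
  have wsn : q * p + (q - (p - 1)) = (q * p - (p - 1)) + q := by
    have : q * 1 ≤ q * p := Nat.mul_le_mul_left q hpp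
    omega
  have hmul : ∀ {x y : R}, x ∈ 𝒜 1 → y ∈ 𝒜 (q - (p - 1)) →
      x ^ (q * p) * y ∈ 𝒜 ((q * p - (p - 1)) + q) := by
    intro x y hx hy
    rw [← wsn]
    exact SetLike.mul_mem_graded (pow_mem_one 𝒜 hx _) hy
  have mf' : f' ∈ 𝒜 (q * p - (p - 1)) := by
    refine mem_of_mul_mem 𝒜 (g := s ^ q) ?_ (pow_mem_one 𝒜 C.hs q) ss0
    rw [mul_comm f', ← hf', mul_assoc]
    exact sub_mem (const_mul_mem 𝒜 a (hmul C.hw D.hg)) (hmul C.hv D.hh)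
  have mg' : g' ∈ 𝒜 (q * p - (p - 1)) := by
    refine mem_of_mul_mem 𝒜 (g := s ^ q) ?_ (pow_mem_one 𝒜 C.hs q) ss0
    rw [mul_comm g', ← hg', mul_assoc _ _ f, hA, hL, hLi, ← map_pow, ← map_mul, ← map_mul]
    exact sub_mem (const_mul_mem 𝒜 _ (hmul C.hw D.hf)) (hmul C.hu D.hh)
  have mh' : h' ∈ 𝒜 (q * p - (p - 1)) := by
    refine mem_of_mul_mem 𝒜 (g := s ^ q) ?_ (pow_mem_one 𝒜 C.hs q) ss0
    rw [mul_comm h', ← hh', mul_assoc _ _ f, hL, hLi, ← map_pow, ← map_mul]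
    exact const_mul_mem 𝒜 _ (sub_mem (hmul C.hu D.hg) (const_mul_mem 𝒜 _ (hmul C.hv D.hf)))
  have ml' : l' ∈ 𝒜 (q * p - (p - 1)) := by
    refine mem_of_mul_mem 𝒜 (g := w ^ q) ?_ (pow_mem_one 𝒜 C.hw q) ws0
    rw [mul_comm l', ← hl']
    exact const_mul_mem 𝒜 _ (sub_mem (hmul C.hu D.hg) (hmul C.hv D.hf))
  refine ⟨f', g', h', l', ⟨mf', mg', mh', ml', hh'', hl'', ?_⟩, by rw [mul_comm, ← hf'], hf''⟩
  intro P hP pf pg ph pl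
  have a1 : a ≠ 1 := by
    rintro rfl
    exact hlq' (by linear_combination ha)
  have k1 : u ^ (q * p) * g - L ^ q * Li * v ^ (q * p) * f ∈ P :=
    mem_of_const_mul_mem a0 (hh' ▸ P.mul_mem_left _ ph)
  have k2 : u ^ (q * p) * g - v ^ (q * p) * f ∈ P :=
    mem_of_const_mul_mem a0 (hl' ▸ P.mul_mem_left _ pl)
  have k3 : v ^ (q * p) * f ∈ P := by
    have hc : lam ^ q * lam⁻¹ - 1 ≠ 0 := by
      intro h0
      apply hlq'
      field_simp at h0
      linear_combination h0
    refine mem_of_const_mul_mem hc ?_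
    have : algebraMap k R (lam ^ q * lam⁻¹ - 1) = L ^ q * Li - 1 := by simp [hL, hLi]
    rw [this]
    convert P.sub_mem k2 k1 using 1; ring
  have k4 : u ^ (q * p) * g ∈ P := by convert P.add_mem k2 k3 using 1; ring
  have gWS : (A * L ^ q * Li - 1) * (u ^ (q * p) * u ^ q) * f ∈ P ∨ v ∉ P := by
    by_cases hv : v ∈ P
    · left
      have hvq : v ^ q ∈ P := P.pow_mem_of_mem hv _ (Nat.pos_of_ne_zero hq0)
      have : (A * L ^ q * Li - 1) * (u ^ (q * p) * u ^ q) * f = (s ^ q * w ^ q) * g'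
          + (A * L ^ q * Li * v ^ (q * p) * f - u ^ (q * p) * g) * v ^ q := by
        linear_combination w ^ q * hg' - A * L ^ q * Li * f * relW - u ^ (q * p) * e3
      rw [this]
      exact P.add_mem (P.mul_mem_left _ pg) (P.mul_mem_left _ hvq)
    · exact Or.inr hv
  have fWS : (1 - A) * (v ^ (q * p) * v ^ q) * g ∈ P ∨ u ∉ P := by
    by_cases hu : u ∈ P
    · left
      have huq : u ^ q ∈ P := P.pow_mem_of_mem hu _ (Nat.pos_of_ne_zero hq0)
      have : (1 - A) * (v ^ (q * p) * v ^ q) * g = (s ^ q * w ^ q) * f'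
          - (A * u ^ (q * p) * g - v ^ (q * p) * f) * u ^ q := by
        linear_combination w ^ q * hf' - A * g * relW - v ^ (q * p) * e3
      rw [this]
      exact P.sub_mem (P.mul_mem_left _ pf) (P.mul_mem_left _ huq)
    · exact Or.inr hu
  have hvf : v ∈ P ∨ f ∈ P := (hP.mem_or_mem k3).imp_left (hP.mem_of_pow_mem _)
  have hug : u ∈ P ∨ g ∈ P := (hP.mem_or_mem k4).imp_left (hP.mem_of_pow_mem _)
  by_cases fP : f ∈ P
  · by_cases gP : g ∈ P
    · have vh : v ^ (q * p) * h ∈ P := by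
        have : v ^ (q * p) * h = A * w ^ (q * p) * g - s ^ q * f' := by linear_combination -hf'
        rw [this]; exact P.sub_mem (P.mul_mem_left _ gP) (P.mul_mem_left _ pf)
      have vl : v ^ (q * p) * l ∈ P := by
        have : v ^ (q * p) * l = A * s ^ (q * p) * g - w ^ q * f' := by linear_combination hf''
        rw [this]; exact P.sub_mem (P.mul_mem_left _ gP) (P.mul_mem_left _ pf)
      have uh : u ^ (q * p) * h ∈ P := by
        have : u ^ (q * p) * h = A * L ^ q * Li * w ^ (q * p) * f - s ^ q * g' := by
          linear_combination -hg'
        rw [this]; exact P.sub_mem (P.mul_mem_left _ fP) (P.mul_mem_left _ pg)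
      have ul : u ^ (q * p) * l ∈ P := by
        have : u ^ (q * p) * l = A * s ^ (q * p) * f - (L * w ^ q) * g' := by
          linear_combination hg''
        rw [this]; exact P.sub_mem (P.mul_mem_left _ fP) (P.mul_mem_left _ pg)
      by_cases hu : u ∈ P
      · by_cases hv : v ∈ P
        · exact ⟨hu, hv⟩
        · exact D.prime P hP fP gP
            ((hP.mem_or_mem vh).resolve_left fun t => hv (hP.mem_of_pow_mem _ t))
            ((hP.mem_or_mem vl).resolve_left fun t => hv (hP.mem_of_pow_mem _ t))
      · exact D.prime P hP fP gP
            ((hP.mem_or_mem uh).resolve_left fun t => hu (hP.mem_of_pow_mem _ t))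
            ((hP.mem_or_mem ul).resolve_left fun t => hu (hP.mem_of_pow_mem _ t))
    · have hu := hug.resolve_right gP
      refine ⟨hu, ?_⟩
      have h1 := (hP.mem_or_mem (fWS.resolve_right (not_not.mpr hu))).resolve_right gP
      have h2 : v ^ (q * p) * v ^ q ∈ P := by
        refine mem_of_const_mul_mem (sub_ne_zero.mpr a1.symm) ?_
        rwa [map_sub, map_one]
      rw [← pow_add] at h2
      exact hP.mem_of_pow_mem _ h2
  · have hv := hvf.resolve_right fP
    refine ⟨?_, hv⟩
    have h1 := (hP.mem_or_mem (gWS.resolve_right (not_not.mpr hv))).resolve_right fP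
    have h2 : u ^ (q * p) * u ^ q ∈ P := by
      have hc : a * lam ^ q * lam⁻¹ - 1 ≠ 0 := by
        intro h0
        field_simp at h0
        apply a1
        linear_combination h0 - ha
      refine mem_of_const_mul_mem hc ?_
      simpa [hL, hLi, hA] using h1
    rw [← pow_add] at h2
    exact hP.mem_of_pow_mem _ h2

theorem syzygyData_exists [CharP R p] [hp : Fact p.Prime] (C : ConeForms 𝒜 p lam u v w s)
    (hlam0 : lam ≠ 0) (hlam : ∀ n : ℕ, lam ^ p ^ (n + 1) ≠ lam) (n : ℕ) :
    ∃ f g h l : R, SyzygyData 𝒜 p lam u v w s (p ^ (n + 1)) f g h l := by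
  have hpp := hp.out.pos
  have hlam1 : lam ≠ 1 := by
    rintro rfl
    exact hlam 0 (by simp)
  have hch : CharP k p := by
    have : Function.Injective (algebraMap k R) := (algebraMap k R).injective
    exact (RingHom.charP_iff (algebraMap k R) this p).mpr inferInstance
  have hq1 : ∀ n : ℕ, lam ^ p ^ (n + 1) ≠ 1 := by
    intro n h1
    apply hlam1
    have h2 : (lam - 1) ^ p ^ (n + 1) = 0 := by rw [sub_pow_char_pow lam 1 (n + 1), h1]; simp
    exact sub_eq_zero.mp (pow_eq_zero_iff (pow_ne_zero _ hpp.ne') |>.mp h2)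
  induction n with
  | zero =>
    have h1 : p ^ (0 + 1) - (p - 1) = 1 := by rw [zero_add, pow_one]; omega
    refine ⟨u, v, w, s, by rw [h1]; exact C.hu, by rw [h1]; exact C.hv, by rw [h1]; exact C.hw,
      by rw [h1]; exact C.hs, ?_, ?_, fun P _ hu hv _ _ => ⟨hu, hv⟩⟩
    · have := C.rel_w
      simp only [pow_succ, zero_add, pow_zero, one_mul] at this ⊢
      exact this.symm
    · have := C.rel_s
      simp only [pow_succ, zero_add, pow_zero, one_mul] at this ⊢
      rw [this]; ring
  | succ n ih =>
    obtain ⟨f, g, h, l, D⟩ := ih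
    obtain ⟨f', g', h', l', Dnext, -⟩ := syzygyData_step 𝒜 C rfl hlam0 hlam1 (hq1 n) (hlam n) D
      (a := (lam - 1) / (lam ^ p ^ (n + 1) - 1))
      (div_mul_cancel₀ _ (sub_ne_zero.mpr (hq1 n)))
    exact ⟨f', g', h', l', by rw [pow_succ p (n + 1)]; exact Dnext⟩

/-- The relation between the `q`-th powers of the three generators of the ideal `J`, where
`q = p ^ (n + 1)`. The degree of the relation is `q * (p + 2) - (p - 1)`, which is less than half of
the sum `q * (2 * p + 4)` of the degrees of the three powers, and its coefficients have no common
zero on the curve. -/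
theorem relation_exists [CharP R p] [hp : Fact p.Prime] [IsAlgClosed k]
    (C : ConeForms 𝒜 p lam u v w s)
    (hlam0 : lam ≠ 0) (hlam : ∀ n : ℕ, lam ^ p ^ (n + 1) ≠ lam) (n : ℕ) :
    ∃ (a b : k) (f g f' : R),
      f ∈ 𝒜 (p ^ (n + 1) - (p - 1)) ∧ g ∈ 𝒜 (p ^ (n + 1) - (p - 1)) ∧
      f' ∈ 𝒜 (p ^ (n + 1) * p - (p - 1)) ∧
      f * (u * v ^ p) ^ p ^ (n + 1) +
        g * (algebraMap k R a * u ^ (p + 1) + algebraMap k R b * v ^ (p + 1)) ^ p ^ (n + 1) +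
        f' * (w * s) ^ p ^ (n + 1) = 0 ∧
      (∀ P : Ideal R, P.IsPrime → f ∈ P → g ∈ P → f' ∈ P → u ∈ P ∧ v ∈ P) ∧
      (∀ P : Ideal R, P.IsPrime → u * v ^ p ∈ P → w * s ∈ P → u ∈ P ∧ v ∈ P) := by
  have hpp := hp.out.pos
  have hlam1 : lam ≠ 1 := by
    rintro rfl
    exact hlam 0 (by simp)
  have hch : CharP k p := by
    have : Function.Injective (algebraMap k R) := (algebraMap k R).injective
    exact (RingHom.charP_iff (algebraMap k R) this p).mpr inferInstance
  set q := p ^ (n + 1) with hq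
  have hq0 : 0 < q := pow_pos hpp _
  have hq1 : lam ^ q ≠ 1 := by
    intro h1
    apply hlam1
    have h2 : (lam - 1) ^ q = 0 := by rw [hq, sub_pow_char_pow lam 1 (n + 1), ← hq, h1]; simp
    exact sub_eq_zero.mp (pow_eq_zero_iff hq0.ne' |>.mp h2)
  set a := (lam - 1) / (lam ^ q - 1) with ha
  have har : a * (lam ^ q - 1) = lam - 1 := div_mul_cancel₀ _ (sub_ne_zero.mpr hq1)
  obtain ⟨f, g, h, l, D⟩ := syzygyData_exists 𝒜 C hlam0 hlam n
  obtain ⟨f', g', h', l', D', h1, h2⟩ :=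
    syzygyData_step 𝒜 C (q := q) rfl hlam0 hlam1 hq1 (hlam n) D har
  obtain ⟨a0, ha0⟩ := IsAlgClosed.exists_pow_nat_eq a hq0
  obtain ⟨b0, hb0⟩ := IsAlgClosed.exists_pow_nat_eq (1 - a) hq0
  have frob : ∀ x y : R, (x + y) ^ q = x ^ q + y ^ q := fun x y => add_pow_char_pow x y p (n + 1)
  have frob' : ∀ x y : R, (x - y) ^ q = x ^ q - y ^ q := fun x y => sub_pow_char_pow x y (n + 1)
  have relW : w ^ (q * p) * w ^ q = u ^ (q * p) * u ^ q - v ^ (q * p) * v ^ q := by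
    have := congrArg (· ^ q) C.rel_w
    simp only [frob', ← pow_mul] at this
    rw [← pow_add, ← pow_add, ← pow_add]
    convert this using 2 <;> ring
  have uofv : ∀ P : Ideal R, P.IsPrime → v ∈ P → w * s ∈ P → u ∈ P := by
    intro P hP hv hws
    rcases hP.mem_or_mem hws with hw | hs
    · have : u ^ (p + 1) = w ^ (p + 1) + v ^ (p + 1) := by rw [C.rel_w]; ring
      refine hP.mem_of_pow_mem (p + 1) ?_
      rw [this]
      exact P.add_mem (P.pow_mem_of_mem hw _ (by omega)) (P.pow_mem_of_mem hv _ (by omega))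
    · have : u ^ (p + 1) = s ^ (p + 1) + algebraMap k R lam * v ^ (p + 1) := by rw [C.rel_s]; ring
      refine hP.mem_of_pow_mem (p + 1) ?_
      rw [this]
      exact P.add_mem (P.pow_mem_of_mem hs _ (by omega))
        (P.mul_mem_left _ (P.pow_mem_of_mem hv _ (by omega)))
  refine ⟨a0, b0, f, -g, f', D.hf, neg_mem D.hg, D'.hf, ?_, ?_, ?_⟩
  · have e3 := D.eq_w
    have e1 : (u * v ^ p) ^ q = u ^ q * v ^ (q * p) := by rw [mul_pow, ← pow_mul, mul_comm p q]
    have e2 : (algebraMap k R a0 * u ^ (p + 1) + algebraMap k R b0 * v ^ (p + 1)) ^ q =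
        algebraMap k R a * (u ^ (q * p) * u ^ q) + (1 - algebraMap k R a) *
          (v ^ (q * p) * v ^ q) := by
      rw [frob, mul_pow, mul_pow, ← map_pow, ← map_pow, ha0, hb0, map_sub, map_one, ← pow_mul,
        ← pow_mul, ← pow_add, ← pow_add]
      congr 3 <;> ring
    rw [e1, e2, mul_pow]
    linear_combination w ^ q * h1 + algebraMap k R a * g * relW + v ^ (q * p) * e3
  · intro P hP hf hg hf'
    have hg : g ∈ P := by simpa using P.neg_mem hg
    have vh : v ^ (q * p) * h ∈ P := by
      have : v ^ (q * p) * h = algebraMap k R a * w ^ (q * p) * g - s ^ q * f' := by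
        linear_combination h1
      rw [this]; exact P.sub_mem (P.mul_mem_left _ hg) (P.mul_mem_left _ hf')
    have vl : v ^ (q * p) * l ∈ P := by
      have : v ^ (q * p) * l = algebraMap k R a * s ^ (q * p) * g - w ^ q * f' := by
        linear_combination h2
      rw [this]; exact P.sub_mem (P.mul_mem_left _ hg) (P.mul_mem_left _ hf')
    by_cases hv : v ∈ P
    · by_cases hws : w * s ∈ P
      · exact ⟨uofv P hP hv hws, hv⟩
      · have hw : w ∉ P := fun t => hws (P.mul_mem_right _ t)
        have hs : s ∉ P := fun t => hws (P.mul_mem_left _ t)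
        have wh : w ^ q * h ∈ P := by
          rw [← D.eq_w]; exact P.sub_mem (P.mul_mem_left _ hf) (P.mul_mem_left _ hg)
        have sl : s ^ q * l ∈ P := by
          rw [← D.eq_s]; exact P.sub_mem (P.mul_mem_left _ hf) (P.mul_mem_left _ hg)
        exact D.prime P hP hf hg
          ((hP.mem_or_mem wh).resolve_left fun t => hw (hP.mem_of_pow_mem _ t))
          ((hP.mem_or_mem sl).resolve_left fun t => hs (hP.mem_of_pow_mem _ t))
    · exact D.prime P hP hf hg
        ((hP.mem_or_mem vh).resolve_left fun t => hv (hP.mem_of_pow_mem _ t))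
        ((hP.mem_or_mem vl).resolve_left fun t => hv (hP.mem_of_pow_mem _ t))
  · intro P hP huv hws
    rcases hP.mem_or_mem huv with hu | hv
    · refine ⟨hu, ?_⟩
      have hx : u ^ (p + 1) ∈ P := P.pow_mem_of_mem hu _ (by omega)
      rcases hP.mem_or_mem hws with hw | hs
      · have : v ^ (p + 1) = u ^ (p + 1) - w ^ (p + 1) := by rw [C.rel_w]; ring
        refine hP.mem_of_pow_mem (p + 1) ?_
        rw [this]
        exact P.sub_mem hx (P.pow_mem_of_mem hw _ (by omega))
      · have : algebraMap k R lam * v ^ (p + 1) = u ^ (p + 1) - s ^ (p + 1) := by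
          rw [C.rel_s]; ring
        refine hP.mem_of_pow_mem (p + 1) (mem_of_const_mul_mem hlam0 ?_)
        rw [this]
        exact P.sub_mem hx (P.pow_mem_of_mem hs _ (by omega))
    · have hv' : v ∈ P := hP.mem_of_pow_mem _ hv
      exact ⟨uofv P hP hv' hws, hv'⟩

end Abstract
end FThresholdDCC

/-! ### F-thresholds from syzygies -/

namespace FThresholdDCC

section Threshold

variable {k R : Type} [Field k] [CommRing R] [IsDomain R] [Algebra k R]
variable (𝒜 : ℕ → Submodule k R)

/-- The map `c ↦ ∑ i, c i * g i` on triples `c` with `c i` homogeneous of degree `m i`. -/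
noncomputable def combo (g : Fin 3 → R) (m : Fin 3 → ℕ) : (∀ i, 𝒜 (m i)) →ₗ[k] R :=
  ∑ i, (LinearMap.mulRight k (g i)) ∘ₗ (𝒜 (m i)).subtype ∘ₗ LinearMap.proj i

theorem combo_apply (g : Fin 3 → R) (m : Fin 3 → ℕ) (c : ∀ i, 𝒜 (m i)) :
    combo 𝒜 g m c = ∑ i, (c i : R) * g i := by
  simp [combo, LinearMap.sum_apply]

variable [GradedAlgebra 𝒜]

/-- The map `t ↦ (t * b i)` from forms of degree `n` to triples of forms. -/
noncomputable def multiples (b : Fin 3 → R) (n : ℕ) (m : Fin 3 → ℕ)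
    (hb : ∀ i, ∀ t ∈ 𝒜 n, t * b i ∈ 𝒜 (m i)) : 𝒜 n →ₗ[k] (∀ i, 𝒜 (m i)) :=
  LinearMap.pi fun i =>
    LinearMap.codRestrict (𝒜 (m i)) ((LinearMap.mulRight k (b i)) ∘ₗ (𝒜 n).subtype)
      fun t => hb i t t.2

theorem combo_range_le (g : Fin 3 → R) (δ : Fin 3 → ℕ) (hg : ∀ i, g i ∈ 𝒜 (δ i)) {r : ℕ}
    (hr : ∀ i, δ i ≤ r) : LinearMap.range (combo 𝒜 g fun i => r - δ i) ≤ 𝒜 r := by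
  rintro _ ⟨c, rfl⟩
  rw [combo_apply]
  refine sum_mem fun i _ => ?_
  have := SetLike.mul_mem_graded (c i).2 (hg i)
  rwa [Nat.sub_add_cancel (hr i)] at this

/-- A form of degree `r` in the ideal generated by homogeneous elements is a combination with
homogeneous coefficients. -/
theorem mem_combo_range (g : Fin 3 → R) (δ : Fin 3 → ℕ) (hg : ∀ i, g i ∈ 𝒜 (δ i)) {r : ℕ}
    (hr : ∀ i, δ i ≤ r) {x : R} (hx : x ∈ 𝒜 r) (hxI : x ∈ Ideal.span (Set.range g)) :
    x ∈ LinearMap.range (combo 𝒜 g fun i => r - δ i) := by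
  obtain ⟨a, ha⟩ := (Ideal.mem_span_range_iff_exists_fun).mp hxI
  refine ⟨fun i => DirectSum.decompose 𝒜 (a i) (r - δ i), ?_⟩
  rw [combo_apply]
  have h1 := DirectSum.decompose_of_mem_same 𝒜 hx
  rw [← ha, DirectSum.decompose_sum, DFinsupp.finsetSum_apply,
    AddSubmonoidClass.coe_finsetSum] at h1
  rw [← ha, ← h1]
  refine Finset.sum_congr rfl fun i _ => ?_
  rw [DirectSum.coe_decompose_mul_of_right_mem_of_le 𝒜 (hg i) (hr i)]

variable [∀ n, Module.Finite k (𝒜 n)]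

/-- If the forms `g i` have a nonzero relation of degree `B`, its multiples make the ideal
generated by the `g i` too small to contain all forms of a large degree `r` with
`r < ∑ i, δ i - B` up to a bounded error. -/
theorem count_lower {e h : ℤ} {n0 : ℕ}
    (hH : ∀ n ≥ n0, (Module.finrank k (𝒜 n) : ℤ) = e * n + h)
    (g b : Fin 3 → R) (δ : Fin 3 → ℕ) (B : ℕ) (hg : ∀ i, g i ∈ 𝒜 (δ i)) (hδB : ∀ i, δ i ≤ B)
    (hb : ∀ i, b i ∈ 𝒜 (B - δ i)) (hrel : ∑ i, b i * g i = 0) (hb0 : ∃ i, b i ≠ 0)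
    {r : ℕ} (hr : n0 + B ≤ r) (hlt : e * r + h < e * (∑ i, (δ i : ℤ) - B)) :
    ∃ x ∈ 𝒜 r, x ∉ Ideal.span (Set.range g) := by
  by_contra hcon
  push Not at hcon
  have hr' : ∀ i, δ i ≤ r := fun i => (hδB i).trans (by omega)
  have h1 : 𝒜 r ≤ LinearMap.range (combo 𝒜 g fun i => r - δ i) :=
    fun x hx => mem_combo_range 𝒜 g δ hg hr' hx (hcon x hx)
  have h2 := Submodule.finrank_mono h1
  have h3 := LinearMap.finrank_range_add_finrank_ker (combo 𝒜 g fun i => r - δ i)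
  rw [Module.finrank_pi_fintype] at h3
  have hb' : ∀ i, ∀ t ∈ 𝒜 (r - B), t * b i ∈ 𝒜 (r - δ i) := by
    intro i t ht
    have := SetLike.mul_mem_graded ht (hb i)
    rwa [show r - B + (B - δ i) = r - δ i by have := hδB i; omega] at this
  have h4 : LinearMap.range (multiples 𝒜 b (r - B) (fun i => r - δ i) hb') ≤
      LinearMap.ker (combo 𝒜 g fun i => r - δ i) := by
    rintro _ ⟨t, rfl⟩
    rw [LinearMap.mem_ker, combo_apply]
    have : ∑ i, (t : R) * b i * g i = t * ∑ i, b i * g i := by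
      rw [Finset.mul_sum]; exact Finset.sum_congr rfl fun i _ => mul_assoc _ _ _
    rw [hrel, mul_zero] at this
    exact this
  have hinj : Function.Injective (multiples 𝒜 b (r - B) (fun i => r - δ i) hb') := by
    rw [injective_iff_map_eq_zero]
    intro t ht
    obtain ⟨i, hi⟩ := hb0
    have : (t : R) * b i = 0 := congrArg Subtype.val (congrFun ht i)
    exact Subtype.ext ((mul_eq_zero.mp this).resolve_right hi)
  have h5 := Submodule.finrank_mono h4
  rw [LinearMap.finrank_range_of_inj hinj] at h5
  simp only [Fin.sum_univ_three] at h3 hlt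
  have e0 := hH (r - δ 0) (by have := hδB 0; omega)
  have e1 := hH (r - δ 1) (by have := hδB 1; omega)
  have e2 := hH (r - δ 2) (by have := hδB 2; omega)
  have e3 := hH r (by omega)
  have e4 := hH (r - B) (by omega)
  rw [Nat.cast_sub (hr' _)] at e0 e1 e2
  rw [Nat.cast_sub (by omega)] at e4
  zify at h2 h3 h5
  linarith

/-- If the forms `g i`, as well as the coefficients of their relation of degree `B`, have no
common zero on the curve, then every form whose degree is at least `B` and `∑ i, δ i - B`, up to a
bounded error, lies in the ideal of the `g i`. The syzygies in degree `r` are the multiples of the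
relation, up to the image of the cross product with it, which embeds into forms of degree
`r + B - ∑ i, δ i`. -/
theorem count_upper {e h : ℤ} {n0 : ℕ}
    (hH : ∀ n ≥ n0, (Module.finrank k (𝒜 n) : ℤ) = e * n + h)
    (g b : Fin 3 → R) (δ : Fin 3 → ℕ) (B : ℕ) (hg : ∀ i, g i ∈ 𝒜 (δ i)) (hδB : ∀ i, δ i ≤ B)
    (hb : ∀ i, b i ∈ 𝒜 (B - δ i)) (hrel : ∑ i, b i * g i = 0) (hb0 : ∃ i, b i ≠ 0)
    (hg0 : g 0 ≠ 0)
    (satg : ∀ γ α : R, γ ≠ 0 → (∀ i, γ ∣ α * g i) → γ ∣ α)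
    (satb : ∀ γ α : R, γ ≠ 0 → (∀ i, γ ∣ α * b i) → γ ∣ α)
    {r : ℕ} (hr : n0 + B ≤ r) (hr2 : n0 + ∑ i, δ i ≤ r + B) :
    ∀ x ∈ 𝒜 r, x ∈ Ideal.span (Set.range g) := by
  have hr' : ∀ i, δ i ≤ r := fun i => (hδB i).trans (by omega)
  set Φ := combo 𝒜 g fun i => r - δ i with hΦ
  have h3 := LinearMap.finrank_range_add_finrank_ker Φ
  rw [Module.finrank_pi_fintype] at h3
  have hb' : ∀ i, ∀ t ∈ 𝒜 (r - B), t * b i ∈ 𝒜 (r - δ i) := by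
    intro i t ht
    have := SetLike.mul_mem_graded ht (hb i)
    rwa [show r - B + (B - δ i) = r - δ i by have := hδB i; omega] at this
  set τ := multiples 𝒜 b (r - B) (fun i => r - δ i) hb' with hτ
  -- the first coordinate of the cross product `c × b`
  set ψ : (∀ i, 𝒜 (r - δ i)) →ₗ[k] R :=
    (LinearMap.mulRight k (b 2)) ∘ₗ (𝒜 (r - δ 1)).subtype ∘ₗ LinearMap.proj 1 -
    (LinearMap.mulRight k (b 1)) ∘ₗ (𝒜 (r - δ 2)).subtype ∘ₗ LinearMap.proj 2 with hψ
  have ψ_apply : ∀ c, ψ c = (c 1 : R) * b 2 - (c 2 : R) * b 1 := fun c => by simp [hψ]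
  have brel : b 0 * g 0 + b 1 * g 1 + b 2 * g 2 = 0 := by rw [← hrel, Fin.sum_univ_three]
  have crel : ∀ c ∈ LinearMap.ker Φ, (c 0 : R) * g 0 + c 1 * g 1 + c 2 * g 2 = 0 := by
    intro c hc
    rw [LinearMap.mem_ker, hΦ, combo_apply, Fin.sum_univ_three] at hc
    exact hc
  have h6 : LinearMap.range (ψ.domRestrict (LinearMap.ker Φ)) ≤
      (𝒜 (r + B - ∑ i, δ i)).map (LinearMap.mulRight k (g 0)) := by
    rintro _ ⟨⟨c, hc⟩, rfl⟩
    have hcr := crel c hc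
    rw [LinearMap.domRestrict_apply, ψ_apply]
    obtain ⟨t, ht⟩ := satg (g 0) ((c 1 : R) * b 2 - (c 2 : R) * b 1) hg0 (by
      intro i
      fin_cases i
      · exact Dvd.intro_left _ rfl
      · exact ⟨(c 2 : R) * b 0 - c 0 * b 2, by
          simp only [Fin.mk_one]; linear_combination b 2 * hcr - (c 2 : R) * brel⟩
      · exact ⟨(c 0 : R) * b 1 - c 1 * b 0, by
          simp only [Fin.reduceFinMk]; linear_combination -b 1 * hcr + (c 1 : R) * brel⟩)
    refine ⟨t, ?_, by rw [LinearMap.mulRight_apply, ht, mul_comm]⟩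
    refine mem_of_mul_mem 𝒜 (g := g 0) ?_ (hg 0) hg0
    rw [mul_comm, ← ht]
    have d1 := SetLike.mul_mem_graded (c 1).2 (hb 2)
    have d2 := SetLike.mul_mem_graded (c 2).2 (hb 1)
    rw [Fin.sum_univ_three] at hr2 ⊢
    have t0 := hδB 0
    have t1 := hδB 1
    have t2 := hδB 2
    rw [show r - δ 1 + (B - δ 2) = r + B - (δ 0 + δ 1 + δ 2) + δ 0 by omega] at d1
    rw [show r - δ 2 + (B - δ 1) = r + B - (δ 0 + δ 1 + δ 2) + δ 0 by omega] at d2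
    exact sub_mem d1 d2
  have h7 : (LinearMap.ker (ψ.domRestrict (LinearMap.ker Φ))).map (LinearMap.ker Φ).subtype ≤
      LinearMap.range τ := by
    rintro _ ⟨⟨c, hc⟩, hc0, rfl⟩
    have hcr := crel c hc
    rw [SetLike.mem_coe, LinearMap.mem_ker, LinearMap.domRestrict_apply, ψ_apply] at hc0
    have x12 : (c 1 : R) * b 2 = c 2 * b 1 := sub_eq_zero.mp hc0
    have x02 : (c 0 : R) * b 2 = c 2 * b 0 := by
      apply mul_right_cancel₀ hg0
      linear_combination b 2 * hcr - (c 2 : R) * brel - g 1 * x12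
    have x01 : (c 0 : R) * b 1 = c 1 * b 0 := by
      apply mul_right_cancel₀ hg0
      linear_combination b 1 * hcr - (c 1 : R) * brel + g 2 * x12
    have hx : ∀ i j, (c i : R) * b j = c j * b i := by
      intro i j
      fin_cases i <;> fin_cases j <;>
        simp only [Fin.zero_eta, Fin.mk_one, Fin.reduceFinMk, x12, x02, x01]
    obtain ⟨i, hi⟩ := hb0
    obtain ⟨t, ht⟩ := satb (b i) (c i) hi fun j => ⟨c j, by rw [hx i j, mul_comm]⟩
    have ht' : ∀ j, (c j : R) = t * b j := by
      intro j
      apply mul_right_cancel₀ hi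
      rw [← hx i j, ht]; ring
    have htm : t ∈ 𝒜 (r - B) := by
      refine mem_of_mul_mem 𝒜 (g := b i) ?_ (hb i) hi
      rw [← ht' i, show r - B + (B - δ i) = r - δ i by have := hδB i; omega]
      exact (c i).2
    exact ⟨⟨t, htm⟩, by ext j; exact (ht' j).symm⟩
  have h8 := Submodule.finrank_mono h6
  have h9 := Submodule.finrank_mono h7
  have h10 := LinearMap.finrank_range_add_finrank_ker (K := k) (V := LinearMap.ker Φ)
    (ψ.domRestrict (LinearMap.ker Φ))
  have h11 : Module.finrank k
      ((LinearMap.ker (ψ.domRestrict (LinearMap.ker Φ))).map (LinearMap.ker Φ).subtype) =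
      Module.finrank k (LinearMap.ker (ψ.domRestrict (LinearMap.ker Φ))) :=
    (Submodule.equivMapOfInjective _ (Submodule.subtype_injective _) _).finrank_eq.symm
  have h12 := h8.trans (Submodule.finrank_map_le _ _)
  have h13 : Module.finrank k (LinearMap.range τ) ≤ Module.finrank k (𝒜 (r - B)) :=
    LinearMap.finrank_range_le τ
  rw [h11] at h9
  have h14 : Module.finrank k (𝒜 r) ≤ Module.finrank k (LinearMap.range Φ) := by
    simp only [Fin.sum_univ_three] at h3 hr2
    have t0 := hδB 0
    have t1 := hδB 1
    have t2 := hδB 2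
    have e0 := hH (r - δ 0) (by omega)
    have e1 := hH (r - δ 1) (by omega)
    have e2 := hH (r - δ 2) (by omega)
    have e3 := hH r (by omega)
    have e4 := hH (r - B) (by omega)
    have e5 := hH (r + B - ∑ i, δ i) (by rw [Fin.sum_univ_three]; omega)
    rw [Nat.cast_sub (hr' _)] at e0 e1 e2
    rw [Nat.cast_sub (by omega)] at e4
    rw [Nat.cast_sub (by rw [Fin.sum_univ_three]; omega)] at e5
    push_cast [Fin.sum_univ_three] at e5
    zify at h3 h9 h10 h12 h13 ⊢
    linarith
  have h15 := Submodule.eq_of_le_of_finrank_le (combo_range_le 𝒜 g δ hg hr') h14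
  intro x hx
  rw [← h15] at hx
  obtain ⟨c, rfl⟩ := hx
  rw [combo_apply]
  exact sum_mem fun i _ => Ideal.mul_mem_left _ _ (Ideal.subset_span ⟨i, rfl⟩)

theorem frobeniusPower_span_range {ι : Type} (p : ℕ) [Fact p.Prime] [CharP R p] (F : ι → R)
    (e : ℕ) : frobeniusPower (Ideal.span (Set.range F)) (p ^ e) =
      Ideal.span (Set.range fun i => F i ^ p ^ e) := by
  have h1 : frobeniusPower (Ideal.span (Set.range F)) (p ^ e) =
      Ideal.map (iterateFrobenius R p e) (Ideal.span (Set.range F)) := by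
    rw [frobeniusPower, Ideal.map]
    congr 1
  rw [h1, Ideal.map_span, ← Set.range_comp]
  rfl

theorem form_mem_pow (hstd : Algebra.adjoin k (𝒜 1 : Set R) = ⊤) {n : ℕ} {x : R}
    (hx : x ∈ 𝒜 n) : x ∈ Ideal.span (𝒜 1 : Set R) ^ n := by
  have key : ∀ y : R, ∀ n : ℕ,
      (DirectSum.decompose 𝒜 y n : R) ∈ Ideal.span (𝒜 1 : Set R) ^ n := by
    intro y
    have hy : y ∈ Submodule.span k (Submonoid.closure (𝒜 1 : Set R) : Set R) := by
      rw [← Algebra.adjoin_eq_span, hstd]; trivial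
    induction hy using Submodule.span_induction with
    | mem y hy =>
      have : ∃ m, y ∈ 𝒜 m ∧ y ∈ Ideal.span (𝒜 1 : Set R) ^ m := by
        induction hy using Submonoid.closure_induction with
        | mem y hy => exact ⟨1, hy, by rw [pow_one]; exact Ideal.subset_span hy⟩
        | one => exact ⟨0, SetLike.one_mem_graded 𝒜, by simp⟩
        | mul a b _ _ iha ihb =>
          obtain ⟨m, hm, hm'⟩ := iha
          obtain ⟨m2, hm2, hm2'⟩ := ihb
          exact ⟨m + m2, SetLike.mul_mem_graded hm hm2, by
            rw [pow_add]; exact Ideal.mul_mem_mul hm' hm2'⟩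
      obtain ⟨m, hm, hm'⟩ := this
      intro n
      by_cases hmn : m = n
      · subst hmn
        rwa [DirectSum.decompose_of_mem_same 𝒜 hm]
      · rw [DirectSum.decompose_of_mem_ne 𝒜 hm hmn]; exact Ideal.zero_mem _
    | zero => intro n; simp
    | add a b _ _ iha ihb =>
      intro n
      rw [DirectSum.decompose_add, DirectSum.add_apply, Submodule.coe_add]
      exact Ideal.add_mem _ (iha n) (ihb n)
    | smul c a _ iha =>
      intro n
      rw [DirectSum.decompose_smul, DirectSum.smul_apply, Submodule.coe_smul, Algebra.smul_def]
      exact Ideal.mul_mem_left _ _ (iha n)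
  have := key x n
  rwa [DirectSum.decompose_of_mem_same 𝒜 hx] at this

theorem irrelevant_eq_span_one (hstd : Algebra.adjoin k (𝒜 1 : Set R) = ⊤) :
    (HomogeneousIdeal.irrelevant 𝒜).toIdeal = Ideal.span (𝒜 1 : Set R) := by
  classical
  apply le_antisymm
  · intro x hx
    have hx0 : (DirectSum.decompose 𝒜 x 0 : R) = 0 := by
      have := (HomogeneousIdeal.mem_irrelevant_iff 𝒜 x).mp hx
      simpa [GradedRing.proj_apply] using this
    rw [← DirectSum.sum_support_decompose 𝒜 x]
    refine sum_mem fun n _ => ?_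
    rcases Nat.eq_zero_or_pos n with rfl | hn
    · rw [hx0]; exact Ideal.zero_mem _
    · exact Ideal.pow_le_self hn.ne' (form_mem_pow 𝒜 hstd (SetLike.coe_mem _))
  · rw [Ideal.span_le]
    intro x hx
    exact HomogeneousIdeal.mem_irrelevant_of_mem 𝒜 one_pos hx

theorem span_one_pow_le (n : ℕ) :
    Ideal.span (𝒜 1 : Set R) ^ n ≤ Ideal.span (𝒜 n : Set R) := by
  induction n with
  | zero =>
    rw [pow_zero, Ideal.one_eq_top, top_le_iff, Ideal.eq_top_iff_one]
    exact Ideal.subset_span (SetLike.one_mem_graded 𝒜)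
  | succ n ih =>
    rw [pow_succ]
    refine (Ideal.mul_mono_left ih).trans ?_
    rw [Ideal.span_mul_span', Ideal.span_le]
    rintro _ ⟨a, ha, b, hb, rfl⟩
    exact Ideal.subset_span (SetLike.mul_mem_graded ha hb)

/-- A relation `∑ i, b i * F i ^ p ^ N = 0` whose coefficients generate an ideal primary to the
maximal ideal determines the `F`-threshold at the ideal generated by the three forms `F i`, as soon
as its degree `B` is less than half of the sum of the degrees of the `F i ^ p ^ N`: the threshold is
that sum minus `B`, divided by `p ^ N`. -/
theorem hasFThreshold_of_relation {p : ℕ} [hp : Fact p.Prime] [CharP R p]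
    (hstd : Algebra.adjoin k (𝒜 1 : Set R) = ⊤) {e h : ℤ} {n0 : ℕ} (he : 0 < e)
    (hH : ∀ n ≥ n0, (Module.finrank k (𝒜 n) : ℤ) = e * n + h)
    {u v : R} (hv : v ≠ 0) (hreg : ∀ (N : ℕ) (a b : R), a * v ^ N = b * u ^ N → v ^ N ∣ b)
    (F b : Fin 3 → R) (d : Fin 3 → ℕ) (N B : ℕ) (hF : ∀ i, F i ∈ 𝒜 (d i)) (hF0 : F 0 ≠ 0)
    (hdB : ∀ i, p ^ N * d i ≤ B) (hb : ∀ i, b i ∈ 𝒜 (B - p ^ N * d i))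
    (hrel : ∑ i, b i * F i ^ p ^ N = 0)
    (radF : ∀ P : Ideal R, P.IsPrime → (∀ i, F i ∈ P) → u ∈ P ∧ v ∈ P)
    (radb : ∀ P : Ideal R, P.IsPrime → (∀ i, b i ∈ P) → u ∈ P ∧ v ∈ P)
    (hgap : 2 * B < p ^ N * ∑ i, d i) :
    HasFThreshold p (HomogeneousIdeal.irrelevant 𝒜).toIdeal (Ideal.span (Set.range F))
      (((p ^ N * ∑ i, d i : ℕ) - (B : ℝ)) / (p : ℝ) ^ N) := by
  have hpp := hp.out.pos
  set D := p ^ N * ∑ i, d i - B with hD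
  set c := h.natAbs + 1 with hc
  have hb0 : ∃ i, b i ≠ 0 := by
    by_contra hcon
    push Not at hcon
    exact hv (radb ⊥ Ideal.isPrime_bot fun i => by simp [hcon i]).2
  -- bounds for `ν` at all large powers of `p`
  have bounds : ∀ q₁ : ℕ, (∃ j, q₁ = p ^ j) → n0 + c ≤ q₁ →
      q₁ * D ≤ fthresholdNu (HomogeneousIdeal.irrelevant 𝒜).toIdeal (Ideal.span (Set.range F))
        (p ^ N * q₁) + c ∧
      fthresholdNu (HomogeneousIdeal.irrelevant 𝒜).toIdeal (Ideal.span (Set.range F))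
        (p ^ N * q₁) ≤ q₁ * D + n0 := by
    rintro q₁ ⟨j, hj⟩ hq₁
    have hq10 : 0 < q₁ := by rw [hj]; exact pow_pos hpp _
    set q := p ^ N * q₁ with hq
    have hq' : q = p ^ (N + j) := by rw [hq, hj, pow_add]
    have hJ : frobeniusPower (Ideal.span (Set.range F)) q =
        Ideal.span (Set.range fun i => F i ^ q) := by
      rw [hq']; exact frobeniusPower_span_range p F (N + j)
    have hg : ∀ i, F i ^ q ∈ 𝒜 (q * d i) := fun i => SetLike.pow_mem_graded q (hF i)
    have hb' : ∀ i, b i ^ q₁ ∈ 𝒜 (q₁ * B - q * d i) := by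
      intro i
      have := SetLike.pow_mem_graded q₁ (hb i)
      rwa [smul_eq_mul, Nat.mul_sub, show q₁ * (p ^ N * d i) = q * d i by rw [hq]; ring] at this
    have hdB' : ∀ i, q * d i ≤ q₁ * B := by
      intro i
      calc q * d i = q₁ * (p ^ N * d i) := by rw [hq]; ring
        _ ≤ q₁ * B := Nat.mul_le_mul_left _ (hdB i)
    have hrel' : ∑ i, b i ^ q₁ * F i ^ q = 0 := by
      have := congrArg (iterateFrobenius R p j) hrel
      rw [map_sum, map_zero] at this
      rw [← this]
      refine Finset.sum_congr rfl fun i _ => ?_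
      rw [iterateFrobenius_def, mul_pow, ← pow_mul, ← hj, hq]
    have hb0' : ∃ i, b i ^ q₁ ≠ 0 := hb0.imp fun i hi => pow_ne_zero _ hi
    have sat : ∀ (g : Fin 3 → R) (n : ℕ),
        (∀ P : Ideal R, P.IsPrime → (∀ i, g i ∈ P) → u ∈ P ∧ v ∈ P) →
        ∀ γ α : R, γ ≠ 0 → (∀ i, γ ∣ α * g i ^ n) → γ ∣ α := by
      intro g n hg γ α hγ hdvd
      have key : ∀ P : Ideal R, P.IsPrime → Ideal.span (Set.range fun i => g i ^ n) ≤ P →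
          u ∈ P ∧ v ∈ P := by
        intro P hP hle
        exact hg P hP fun i => hP.mem_of_pow_mem n (hle (Ideal.subset_span ⟨i, rfl⟩))
      refine sat_dvd hv hreg (I := Ideal.span (Set.range fun i => g i ^ n))
        (mem_radical_of_primes fun P hP hle => (key P hP hle).1)
        (mem_radical_of_primes fun P hP hle => (key P hP hle).2) hγ ?_
      intro x hx
      obtain ⟨a, rfl⟩ := Ideal.mem_span_range_iff_exists_fun.mp hx
      rw [Finset.mul_sum]
      refine Finset.dvd_sum fun i _ => ?_
      rw [mul_left_comm]
      exact (hdvd i).mul_left _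
    have sumδ : ∑ i, q * d i = q₁ * D + q₁ * B := by
      rw [← Finset.mul_sum, ← Nat.mul_add, hD, Nat.sub_add_cancel (by omega), hq]; ring
    have hBD : q₁ * B + q₁ ≤ q₁ * D := by
      rw [← Nat.mul_succ]; exact Nat.mul_le_mul_left _ (by omega)
    have upper : ∀ r, q₁ * D + n0 ≤ r →
        (HomogeneousIdeal.irrelevant 𝒜).toIdeal ^ r ≤
          frobeniusPower (Ideal.span (Set.range F)) q := by
      intro r hr
      rw [irrelevant_eq_span_one 𝒜 hstd, hJ]
      refine (span_one_pow_le 𝒜 r).trans ?_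
      rw [Ideal.span_le]
      exact count_upper 𝒜 hH (fun i => F i ^ q) (fun i => b i ^ q₁) (fun i => q * d i) (q₁ * B)
        hg hdB' hb' hrel' hb0' (pow_ne_zero _ hF0) (sat F q radF) (sat b q₁ radb)
        (by omega) (by rw [sumδ]; omega)
    have bdd : ∀ r ∈ {r : ℕ | ¬ (HomogeneousIdeal.irrelevant 𝒜).toIdeal ^ r ≤
        frobeniusPower (Ideal.span (Set.range F)) q}, r ≤ q₁ * D + n0 := by
      intro r hr
      by_contra hcon
      exact hr (upper r (by omega))
    have lower : q₁ * D - c ∈ {r : ℕ | ¬ (HomogeneousIdeal.irrelevant 𝒜).toIdeal ^ r ≤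
        frobeniusPower (Ideal.span (Set.range F)) q} := by
      have hlt : e * ((q₁ * D - c : ℕ) : ℤ) + h <
          e * (∑ i, ((q * d i : ℕ) : ℤ) - ((q₁ * B : ℕ) : ℤ)) := by
        have hcast : ((q₁ * D + q₁ * B : ℕ) : ℤ) - ((q₁ * B : ℕ) : ℤ) = ((q₁ * D : ℕ) : ℤ) := by
          push_cast
          ring
        have hc : h < (c : ℤ) := by omega
        have hec : h < e * (c : ℤ) := by nlinarith [Int.natCast_nonneg c]
        rw [← Nat.cast_sum, sumδ, hcast, Nat.cast_sub (show c ≤ q₁ * D by omega), mul_sub]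
        linarith
      obtain ⟨x, hx, hxJ⟩ := count_lower 𝒜 hH (fun i => F i ^ q) (fun i => b i ^ q₁)
        (fun i => q * d i) (q₁ * B) hg hdB' hb' hrel' hb0' (r := q₁ * D - c) (by omega) hlt
      intro hle
      rw [irrelevant_eq_span_one 𝒜 hstd, hJ] at hle
      exact hxJ (hle (form_mem_pow 𝒜 hstd hx))
    have h1 : q₁ * D - c ≤ fthresholdNu (HomogeneousIdeal.irrelevant 𝒜).toIdeal
        (Ideal.span (Set.range F)) q := le_csSup ⟨_, bdd⟩ lower
    exact ⟨by omega, csSup_le ⟨_, lower⟩ bdd⟩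
  rw [HasFThreshold, ← tendsto_sub_nhds_zero_iff]
  have hp1 : (1 : ℝ) < p := by exact_mod_cast hp.out.one_lt
  have hzero : Filter.Tendsto (fun j : ℕ => ((c : ℝ) + n0) / (p : ℝ) ^ j) Filter.atTop (nhds 0) :=
    tendsto_const_nhds.div_atTop (tendsto_pow_atTop_atTop_of_one_lt hp1)
  refine squeeze_zero_norm' ?_ hzero
  filter_upwards [Filter.eventually_ge_atTop (N + (n0 + c))] with j hj
  obtain ⟨i, rfl⟩ := Nat.exists_eq_add_of_le (show N ≤ j by omega)
  have hi : n0 + c ≤ p ^ i := by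
    have : i < p ^ i := Nat.lt_pow_self hp.out.one_lt
    omega
  obtain ⟨b1, b2⟩ := bounds (p ^ i) ⟨i, rfl⟩ hi
  rw [← pow_add] at b1 b2
  set ν := fthresholdNu (HomogeneousIdeal.irrelevant 𝒜).toIdeal (Ideal.span (Set.range F))
    (p ^ (N + i)) with hν
  have hDr : (((p ^ N * ∑ i, d i : ℕ) : ℝ) - B) = (D : ℝ) := by
    rw [hD, Nat.cast_sub (by omega)]
  have hp0 : (0 : ℝ) < p := by linarith
  have : (ν : ℝ) / (p : ℝ) ^ (N + i) - (((p ^ N * ∑ i, d i : ℕ) : ℝ) - B) / (p : ℝ) ^ N =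
      ((ν : ℝ) - (p : ℝ) ^ i * D) / (p : ℝ) ^ (N + i) := by
    rw [hDr, pow_add]; field_simp
  rw [this, Real.norm_eq_abs, abs_div, abs_of_pos (pow_pos hp0 (N + i))]
  gcongr
  have b1' : (p : ℝ) ^ i * D ≤ ν + c := by exact_mod_cast b1
  have b2' : (ν : ℝ) ≤ (p : ℝ) ^ i * D + n0 := by exact_mod_cast b2
  rw [abs_le]
  constructor
  · have : (0 : ℝ) ≤ n0 := by positivity
    linarith
  · have : (0 : ℝ) ≤ c := by positivity
    linarith

end Threshold
end FThresholdDCC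

/-! ### Normality of cyclic covers -/

namespace FThresholdDCC
open Polynomial

/-- Clearing the denominators of an integral element of the field `L = K(s)`, where `s ^ d = h`:
the discriminant of `1, s, …, s ^ (d - 1)` is a unit times a power of `h = s ^ d`. -/
theorem exists_pow_mul_mem {B C K L : Type*} [CommRing B] [IsDomain B] [IsIntegrallyClosed B]
    [Field K] [Algebra B K] [IsFractionRing B K] [CommRing C] [Field L] [Algebra B C]
    [Algebra C L] [Algebra K L] [Algebra B L] [IsScalarTower B C L] [IsScalarTower B K L]
    (pb : PowerBasis K L) (s : C) (hgen : algebraMap C L s = pb.gen) (h : B) (h0 : h ≠ 0)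
    {d : ℕ} (hd0 : 0 < d) (hs : s ^ d = algebraMap B C h)
    (hmin : minpoly K pb.gen = X ^ d - Polynomial.C (algebraMap B K h)) (hd : IsUnit (d : B))
    {z : L} (hz : IsIntegral B z) :
    ∃ (m : ℕ) (c : C), algebraMap C L c = pb.gen ^ m * z := by
  have hK : Function.Injective (algebraMap B K) := IsFractionRing.injective B K
  have hh : algebraMap B K h ≠ 0 := by rwa [Ne, map_eq_zero_iff _ hK]
  have hdK : (d : K) ≠ 0 := by
    have := hd.map (algebraMap B K)
    rw [map_natCast] at this
    exact this.ne_zero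
  have hsep : (minpoly K pb.gen).Separable := by
    rw [hmin]
    exact separable_X_pow_sub_C _ hdK hh
  have : Module.Finite K L := pb.finite
  have : Algebra.IsSeparable K L := by
    have h1 : IsSeparable K pb.gen := hsep
    have := (IntermediateField.isSeparable_adjoin_simple_iff_isSeparable (F := K) (E := L)
      (x := pb.gen)).2 h1
    have htop : IntermediateField.adjoin K {pb.gen} = ⊤ := by
      rw [← IntermediateField.toSubalgebra_inj,
        IntermediateField.adjoin_simple_toSubalgebra_of_isAlgebraic
        (Algebra.IsAlgebraic.isAlgebraic _), pb.adjoin_gen_eq_top, IntermediateField.top_toSubalgebra]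
    rw [htop] at this
    exact Algebra.IsSeparable.of_algHom K (⊤ : IntermediateField K L)
      (IntermediateField.topEquiv (F := K) (E := L)).symm.toAlgHom
  have hgs : pb.gen ^ d = algebraMap B L h := by
    rw [← hgen, ← map_pow, hs, ← IsScalarTower.algebraMap_apply]
  have hgi : IsIntegral B pb.gen := by
    refine IsIntegral.of_pow hd0 ?_
    rw [hgs]
    exact isIntegral_algebraMap
  have key := Algebra.discr_mul_isIntegral_mem_adjoin K (B := pb) hgi hz
  have hadj : ∀ y ∈ Algebra.adjoin B {pb.gen}, ∃ c : C, algebraMap C L c = y := by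
    intro y hy
    have : Algebra.adjoin B {pb.gen} ≤ (IsScalarTower.toAlgHom B C L).range := by
      rw [Algebra.adjoin_le_iff]
      rintro _ rfl
      exact ⟨s, hgen⟩
    exact this hy
  obtain ⟨c, hc⟩ := hadj _ key
  have hdiscr : ∃ (e : B) (m : ℕ), IsUnit e ∧
      Algebra.discr K pb.basis = algebraMap B K (e * h ^ m) := by
    rw [Algebra.discr_powerBasis_eq_norm, hmin]
    have hder : aeval pb.gen (derivative (X ^ d - Polynomial.C (algebraMap B K h))) =
        algebraMap K L (d : K) * pb.gen ^ (d - 1) := by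
      rw [derivative_sub, derivative_C, sub_zero, derivative_X_pow]
      simp
    rw [hder, map_mul, map_pow, Algebra.norm_algebraMap,
      Algebra.PowerBasis.norm_gen_eq_coeff_zero_minpoly, hmin]
    have hco : (X ^ d - Polynomial.C (algebraMap B K h)).coeff 0 = - algebraMap B K h := by
      simp [hd0.ne', coeff_X_pow, hd0.ne]
    rw [hco, neg_eq_neg_one_mul (algebraMap B K h)]
    refine ⟨(-1) ^ (Module.finrank K L * (Module.finrank K L - 1) / 2) *
      ((d : B) ^ Module.finrank K L * ((-1) ^ pb.dim * (-1)) ^ (d - 1)), d - 1, ?_, ?_⟩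
    · have h1 : IsUnit (-1 : B) := isUnit_one.neg
      exact (h1.pow _).mul ((hd.pow _).mul (((h1.pow _).mul h1).pow _))
    · simp only [map_mul, map_pow, map_neg, map_one, map_natCast]
      ring
  obtain ⟨e, m, he, hem⟩ := hdiscr
  obtain ⟨e', he'⟩ := he.exists_left_inv
  refine ⟨d * m, algebraMap B C e' * c, ?_⟩
  rw [map_mul, hc, hem, ← IsScalarTower.algebraMap_apply, algebraMap_smul, Algebra.smul_def,
    ← mul_assoc, ← map_mul, ← mul_assoc, he', one_mul, map_pow, ← hgs, pow_mul]

/-- If `s ^ m * t` lies in `C` for an integral `t`, and `C / s C` is reduced, then `t` lies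
in `C`. -/
theorem descend_denominator {C L : Type*} [CommRing C] [Field L] [Algebra C L]
    (hinj : Function.Injective (algebraMap C L)) (s : C) (s0 : s ≠ 0)
    (hred : ∀ c n, s ∣ c ^ n → s ∣ c) {t : L} (ht : IsIntegral C t) (m : ℕ) :
    ∀ c : C, algebraMap C L c = algebraMap C L s ^ m * t → ∃ y : C, algebraMap C L y = t := by
  have hs0 : algebraMap C L s ≠ 0 := by rwa [Ne, map_eq_zero_iff _ hinj]
  induction m with
  | zero => intro c hc; exact ⟨c, by simpa using hc⟩
  | succ m ih =>
    intro c hc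
    obtain ⟨P, hP, hPt⟩ := ht
    have h1 : aeval (algebraMap C L (s ^ (m + 1)) * t) (P.scaleRoots (s ^ (m + 1))) = 0 :=
      scaleRoots_aeval_eq_zero hPt
    rw [map_pow, ← hc, aeval_algebraMap_apply, map_eq_zero_iff _ hinj] at h1
    have hdvd : s ∣ c ^ P.natDegree := by
      rw [← Ideal.mem_span_singleton, ← Ideal.Quotient.eq_zero_iff_mem, map_pow]
      by_cases htriv : Nontrivial (C ⧸ Ideal.span {s})
      · have h2 := congrArg (Ideal.Quotient.mk (Ideal.span {s})) h1
        rw [map_zero, coe_aeval_eq_eval, ← eval₂_at_apply, ← eval_map, map_scaleRoots] at h2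
        · rw [map_pow, Ideal.Quotient.eq_zero_iff_mem.2 (Ideal.mem_span_singleton_self s),
            zero_pow (by omega), scaleRoots_zero, (hP.map _).leadingCoeff, hP.natDegree_map] at h2
          simpa using h2
        · rw [hP.leadingCoeff, map_one]; exact one_ne_zero
      · rw [not_nontrivial_iff_subsingleton] at htriv
        exact Subsingleton.elim _ _
    obtain ⟨c', rfl⟩ := hred c _ hdvd
    refine ih c' ?_
    rw [map_mul, pow_succ', mul_assoc] at hc
    exact mul_left_cancel₀ hs0 hc

/-- Irreducibility of `X ^ d - h` by Eisenstein's criterion at a point where `h` vanishes to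
first order; the point with a tangent direction is given as a map to the dual numbers. -/
theorem irreducible_of_tangent {B F : Type*} [CommRing B] [IsDomain B] [Field F]
    (φ : B →+* TrivSqZeroExt F F) {h : B} (h1 : (φ h).fst = 0) (h2 : (φ h).snd ≠ 0)
    {d : ℕ} (hd : 0 < d) : Irreducible (X ^ d - C h : B[X]) := by
  let ψ : B →+* F := (TrivSqZeroExt.fstHom F F F).toRingHom.comp φ
  have hψ : ∀ b, ψ b = (φ b).fst := fun b => rfl
  have hmon : (X ^ d - C h : B[X]).Monic := monic_X_pow_sub_C h hd.ne'
  have hsq : ∀ b ∈ RingHom.ker ψ ^ 2, φ b = 0 := by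
    intro b hb
    have : RingHom.ker ψ ^ 2 ≤ RingHom.ker φ := by
      rw [pow_two, Ideal.mul_le]
      intro a ha b hb
      rw [RingHom.mem_ker, hψ] at ha hb
      rw [RingHom.mem_ker, map_mul]
      ext <;> simp [ha, hb]
    exact this hb
  refine irreducible_of_eisenstein_criterion (P := RingHom.ker ψ) (RingHom.ker_isPrime ψ) ?_ ?_ ?_
    ?_ hmon.isPrimitive
  · rw [hmon.leadingCoeff, RingHom.mem_ker, map_one]; exact one_ne_zero
  · intro n hn
    rw [degree_X_pow_sub_C hd, Nat.cast_lt] at hn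
    rw [coeff_sub, coeff_X_pow, if_neg hn.ne, zero_sub, neg_mem_iff, coeff_C]
    split_ifs
    · rw [RingHom.mem_ker, hψ, h1]
    · exact zero_mem _
  · rw [degree_X_pow_sub_C hd]; exact_mod_cast hd
  · rw [coeff_sub, coeff_X_pow, if_neg hd.ne, zero_sub, neg_mem_iff, coeff_C_zero]
    intro hmem
    exact h2 (by rw [hsq _ hmem]; rfl)

/-- `s ∣ c` is detected by the constant coefficient, where `s` is the adjoined root. -/
theorem root_dvd_of_pow {B : Type*} [CommRing B] {h : B} {d : ℕ} (hd : 0 < d)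
    (hred : ∀ b n, h ∣ b ^ n → h ∣ b) (c : AdjoinRoot (X ^ d - C h : B[X])) (n : ℕ)
    (hc : AdjoinRoot.root (X ^ d - C h : B[X]) ∣ c ^ n) :
    AdjoinRoot.root (X ^ d - C h : B[X]) ∣ c := by
  have hroot : AdjoinRoot.root (X ^ d - C h : B[X]) ^ d = AdjoinRoot.of _ h := by
    have := AdjoinRoot.eval₂_root (X ^ d - C h : B[X])
    rwa [eval₂_sub, eval₂_X_pow, eval₂_C, sub_eq_zero] at this
  let π : AdjoinRoot (X ^ d - C h : B[X]) →+* B ⧸ Ideal.span {h} :=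
    AdjoinRoot.lift (Ideal.Quotient.mk _) 0 (by
      rw [eval₂_sub, eval₂_X_pow, eval₂_C, zero_pow hd.ne', zero_sub, neg_eq_zero,
        Ideal.Quotient.eq_zero_iff_mem]
      exact Ideal.mem_span_singleton_self h)
  obtain ⟨g, rfl⟩ := AdjoinRoot.mk_surjective c
  have hg : AdjoinRoot.mk (X ^ d - C h : B[X]) g = AdjoinRoot.root _ * AdjoinRoot.mk _ g.divX +
      AdjoinRoot.of _ (g.coeff 0) := by
    conv_lhs => rw [← X_mul_divX_add g]
    rw [map_add, map_mul]
    rfl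
  have hπ : π (AdjoinRoot.mk _ g) = Ideal.Quotient.mk _ (g.coeff 0) := by
    rw [hg, map_add, map_mul, AdjoinRoot.lift_root, AdjoinRoot.lift_of, zero_mul, zero_add]
  have h1 : h ∣ g.coeff 0 := by
    refine hred _ n ?_
    rw [← Ideal.mem_span_singleton, ← Ideal.Quotient.eq_zero_iff_mem, map_pow, ← hπ, ← map_pow]
    obtain ⟨y, hy⟩ := hc
    rw [hy, map_mul, AdjoinRoot.lift_root, zero_mul]
  obtain ⟨y, hy⟩ := h1
  rw [hg, hy, map_mul, ← hroot]
  exact dvd_add (dvd_mul_right _ _) ((dvd_pow_self _ hd.ne').mul_right _)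

/-- Normality of the cyclic cover `B[h ^ (1 / d)]` of a normal domain along a reduced divisor. -/
theorem cyclicCover_normal {B F : Type*} [CommRing B] [IsDomain B] [IsIntegrallyClosed B] [Field F]
    (φ : B →+* TrivSqZeroExt F F) {h : B} (h1 : (φ h).fst = 0) (h2 : (φ h).snd ≠ 0)
    {d : ℕ} (hd : 0 < d) (hdu : IsUnit (d : B)) (hred : ∀ b n, h ∣ b ^ n → h ∣ b) :
    IsDomain (AdjoinRoot (X ^ d - C h : B[X])) ∧
      IsIntegrallyClosed (AdjoinRoot (X ^ d - C h : B[X])) := by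
  have h0 : h ≠ 0 := by
    rintro rfl
    simp at h2
  set f : B[X] := X ^ d - C h with hf
  have hmon : f.Monic := monic_X_pow_sub_C h hd.ne'
  let K := FractionRing B
  have hK : Function.Injective (algebraMap B K) := IsFractionRing.injective B K
  have hirr : Irreducible (f.map (algebraMap B K)) :=
    (hmon.irreducible_iff_irreducible_map_fraction_map (K := K)).1
      (irreducible_of_tangent φ h1 h2 hd)
  have : Fact (Irreducible (f.map (algebraMap B K))) := ⟨hirr⟩
  let L := AdjoinRoot (f.map (algebraMap B K))
  let ι : AdjoinRoot f →+* L := AdjoinRoot.map (algebraMap B K) f _ dvd_rfl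
  have hιmk : ∀ g : B[X], ι (AdjoinRoot.mk f g) = AdjoinRoot.mk _ (g.map (algebraMap B K)) := by
    intro g
    rw [show ι (AdjoinRoot.mk f g) = eval₂ ((AdjoinRoot.of _).comp (algebraMap B K))
      (AdjoinRoot.root _) g from AdjoinRoot.lift_mk _ _, ← eval₂_map, ← AdjoinRoot.algebraMap_eq,
      ← aeval_def, AdjoinRoot.aeval_eq]
  have hι : Function.Injective ι := by
    rw [injective_iff_map_eq_zero]
    intro c hc
    obtain ⟨g, rfl⟩ := AdjoinRoot.mk_surjective c
    rw [hιmk, AdjoinRoot.mk_eq_zero, map_dvd_map _ hK hmon] at hc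
    rwa [AdjoinRoot.mk_eq_zero]
  have hdom : IsDomain (AdjoinRoot f) := hι.isDomain ι
  refine ⟨hdom, ?_⟩
  letI : Algebra (AdjoinRoot f) L := ι.toAlgebra
  have halg : ∀ c, algebraMap (AdjoinRoot f) L c = ι c := fun _ => rfl
  have : IsScalarTower B (AdjoinRoot f) L := by
    refine IsScalarTower.of_algebraMap_eq fun b => ?_
    rw [halg, AdjoinRoot.algebraMap_eq, ← AdjoinRoot.mk_C, hιmk, map_C, AdjoinRoot.mk_C]
    rfl
  have hne : f.map (algebraMap B K) ≠ 0 := hirr.ne_zero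
  have hmapf : f.map (algebraMap B K) = X ^ d - C (algebraMap B K h) := by
    simp [hf]
  let pb := AdjoinRoot.powerBasis hne
  have hgen : algebraMap (AdjoinRoot f) L (AdjoinRoot.root f) = pb.gen := by
    rw [halg, ← AdjoinRoot.mk_X, hιmk, map_X, AdjoinRoot.mk_X]
    exact (AdjoinRoot.powerBasis_gen hne).symm
  have hmin : minpoly K pb.gen = X ^ d - C (algebraMap B K h) := by
    rw [AdjoinRoot.minpoly_powerBasis_gen hne, (hmon.map _).leadingCoeff, inv_one, C_1, mul_one,
      hmapf]
  have hroot : AdjoinRoot.root f ^ d = algebraMap B (AdjoinRoot f) h := by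
    have := AdjoinRoot.eval₂_root f
    rwa [hf, eval₂_sub, eval₂_X_pow, eval₂_C, sub_eq_zero] at this
  have hrt0 : AdjoinRoot.root f ≠ 0 := by
    intro h3
    have h4 : AdjoinRoot.mk f (C h) = 0 := by
      rw [AdjoinRoot.mk_C, ← AdjoinRoot.algebraMap_eq, ← hroot, h3, zero_pow hd.ne']
    have h5 := hιmk (C h)
    rw [h4, map_zero, map_C, AdjoinRoot.mk_C] at h5
    have h6 : algebraMap B K h ≠ 0 := by rwa [Ne, map_eq_zero_iff _ hK]
    exact h6 ((map_eq_zero (AdjoinRoot.of (f.map (algebraMap B K)))).1 h5.symm)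
  have hfin : Module.Finite B (AdjoinRoot f) := hmon.finite_adjoinRoot
  have hclear : ∀ z : L, IsIntegral B z → ∃ (m : ℕ) (c : AdjoinRoot f),
      algebraMap (AdjoinRoot f) L c = algebraMap (AdjoinRoot f) L (AdjoinRoot.root f) ^ m * z := by
    intro z hz
    rw [hgen]
    exact exists_pow_mul_mem (B := B) (C := AdjoinRoot f) (K := K) (L := L) pb _ hgen h h0 hd hroot
      hmin hdu hz
  have : FaithfulSMul (AdjoinRoot f) L := (faithfulSMul_iff_algebraMap_injective _ _).2 hι
  have : IsFractionRing (AdjoinRoot f) L := by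
    refine IsFractionRing.of_field _ _ fun z => ?_
    have : Module.Finite K L := pb.finite
    have hzK : IsAlgebraic B z :=
      (IsFractionRing.isAlgebraic_iff B K L).2 (Algebra.IsAlgebraic.isAlgebraic z)
    obtain ⟨y, hy0, hy⟩ := hzK.exists_integral_multiple
    obtain ⟨m, c, hc⟩ := hclear _ hy
    refine ⟨c, AdjoinRoot.root f ^ m * algebraMap B _ y, ?_⟩
    have h7 : algebraMap (AdjoinRoot f) L (AdjoinRoot.root f) ≠ 0 := by
      rwa [Ne, halg, map_eq_zero_iff _ hι]
    have h8 : algebraMap B L y ≠ 0 := by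
      rw [IsScalarTower.algebraMap_apply B K L, Ne, map_eq_zero, map_eq_zero_iff _ hK]
      exact hy0
    rw [hc, map_mul, map_pow, ← IsScalarTower.algebraMap_apply, Algebra.smul_def]
    rw [eq_div_iff (mul_ne_zero (pow_ne_zero _ h7) h8)]
    ring
  rw [isIntegrallyClosed_iff L]
  intro t ht
  have htB : IsIntegral B t := isIntegral_trans t ht
  obtain ⟨m, c, hc⟩ := hclear t htB
  exact descend_denominator hι _ hrt0 (root_dvd_of_pow hd hred) ht m c hc

end FThresholdDCC

/-! ### Gradings from coactions of the multiplicative group -/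

namespace FThresholdDCC
open Polynomial

section WeightGrading

variable {k R ι : Type} [Field k] [CommRing R] [Algebra k R]

/-- The elements of weight `n` for a coaction `ρ : R → R[X]` of the multiplicative group. -/
noncomputable def weightSpace (ρ : R →ₐ[k] R[X]) (n : ℕ) : Submodule k R :=
  LinearMap.eqLocus ρ.toLinearMap ((monomial n : R →ₗ[R] R[X]).restrictScalars k)

theorem mem_weightSpace (ρ : R →ₐ[k] R[X]) (n : ℕ) (r : R) :
    r ∈ weightSpace ρ n ↔ ρ r = monomial n r := Iff.rfl

theorem weightSpace_eq_span (ρ : R →ₐ[k] R[X]) (bas : Module.Basis ι k R) (deg : ι → ℕ)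
    (hρ : ∀ i, ρ (bas i) = monomial (deg i) (bas i)) (n : ℕ) :
    weightSpace ρ n = Submodule.span k (Set.range fun i : {i // deg i = n} => bas i) := by
  apply le_antisymm
  · intro r hr
    rw [mem_weightSpace] at hr
    have h1 : r = ((ρ r).coeff n) := by rw [hr, coeff_monomial_same]
    rw [h1]
    have h2 : ∀ x : R, (ρ x).coeff n ∈
        Submodule.span k (Set.range fun i : {i // deg i = n} => bas i) := by
      intro x
      have hx : x ∈ Submodule.span k (Set.range bas) := by rw [bas.span_eq]; trivial
      induction hx using Submodule.span_induction with
      | mem x hx =>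
        obtain ⟨i, rfl⟩ := hx
        rw [hρ, coeff_monomial]
        split_ifs with h
        · exact Submodule.subset_span ⟨⟨i, h⟩, rfl⟩
        · exact zero_mem _
      | zero => rw [map_zero, coeff_zero]; exact zero_mem _
      | add x y _ _ hx hy => rw [map_add, coeff_add]; exact add_mem hx hy
      | smul c x _ hx => rw [map_smul, coeff_smul]; exact Submodule.smul_mem _ _ hx
    exact h2 r
  · rw [Submodule.span_le]
    rintro _ ⟨⟨i, rfl⟩, rfl⟩
    exact hρ i

/-- The grading of `R` by weights, when `R` has a basis of weight vectors. -/
@[reducible]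
noncomputable def weightGrading (ρ : R →ₐ[k] R[X]) (bas : Module.Basis ι k R) (deg : ι → ℕ)
    (hρ : ∀ i, ρ (bas i) = monomial (deg i) (bas i)) : GradedAlgebra (weightSpace ρ) := by
  classical
  have hmon : SetLike.GradedMonoid (weightSpace ρ) := by
    refine { one_mem := ?_, mul_mem := ?_ }
    · rw [mem_weightSpace, map_one]; rfl
    · intro i j a b ha hb
      rw [mem_weightSpace] at *
      rw [map_mul, ha, hb, monomial_mul_monomial]
  have hinternal : DirectSum.IsInternal (weightSpace ρ) := by
    refine DirectSum.isInternal_submodule_of_iSupIndep_of_iSup_eq_top ?_ ?_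
    · rw [iSupIndep_iff_finsetSum_eq_zero_imp_eq_zero]
      intro t v hv hsum i hi
      have h1 : ∀ j ∈ t, ρ (v j) = monomial j (v j) := fun j hj => hv j hj
      have h2 := congrArg (fun r => (ρ r).coeff i) hsum
      simp only [map_sum, map_zero, coeff_zero, Finset.sum_congr rfl h1, finsetSum_coeff,
        coeff_monomial, Finset.sum_ite_eq', if_pos hi] at h2
      exact h2
    · rw [eq_top_iff, ← bas.span_eq, Submodule.span_le]
      rintro _ ⟨i, rfl⟩
      exact Submodule.mem_iSup_of_mem (deg i) (hρ i)
  exact { hmon, hinternal.chooseDecomposition with }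

theorem finite_weightSpace (ρ : R →ₐ[k] R[X]) (bas : Module.Basis ι k R) (deg : ι → ℕ)
    (hρ : ∀ i, ρ (bas i) = monomial (deg i) (bas i)) (n : ℕ) [Finite {i // deg i = n}] :
    Module.Finite k (weightSpace ρ n) := by
  rw [weightSpace_eq_span ρ bas deg hρ]
  exact Module.Finite.span_of_finite k (Set.finite_range _)

theorem finrank_weightSpace (ρ : R →ₐ[k] R[X]) (bas : Module.Basis ι k R) (deg : ι → ℕ)
    (hρ : ∀ i, ρ (bas i) = monomial (deg i) (bas i)) (n : ℕ) [Fintype {i // deg i = n}] :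
    Module.finrank k (weightSpace ρ n) = Fintype.card {i // deg i = n} := by
  rw [weightSpace_eq_span ρ bas deg hρ]
  exact finrank_span_eq_card (bas.linearIndependent.comp _ Subtype.val_injective)

end WeightGrading
end FThresholdDCC

/-! ### The cone as an iterated cyclic cover -/

namespace FThresholdDCC
open Polynomial

section Ring

variable {k : Type} [Field k]

/-- The form `u ^ d - μ v ^ d` in `k[v][u]`. -/
noncomputable def binForm (d : ℕ) (μ : k) : k[X][X] := X ^ d - C (C μ * X ^ d)

theorem exists_roots [IsAlgClosed k] {d : ℕ} (hd : (d : k) ≠ 0) {μ : k} (hμ : μ ≠ 0) :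
    ∃ ζ : Fin d → k, Function.Injective ζ ∧ ∀ i, ζ i ^ d = μ := by
  classical
  have hd0 : 0 < d := Nat.pos_of_ne_zero (by rintro rfl; simp at hd)
  have hcard := card_rootSet_eq_natDegree (K := k) (separable_X_pow_sub_C μ hd hμ)
    (IsAlgClosed.splits _)
  rw [natDegree_X_pow_sub_C] at hcard
  let e := (Fintype.equivFinOfCardEq hcard).symm
  refine ⟨fun i => e i, Subtype.val_injective.comp e.injective, fun i => ?_⟩
  have := (mem_rootSet.1 (e i).2).2
  simpa [sub_eq_zero] using this

theorem lines_injective {d : ℕ} {ζ : Fin d → k} (h : Function.Injective ζ) :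
    Function.Injective fun i => (C (ζ i) * X : k[X]) := by
  intro i j hij
  exact h (C_injective (mul_right_cancel₀ X_ne_zero hij))

theorem binForm_monic {d : ℕ} (hd : 0 < d) (μ : k) : (binForm d μ).Monic :=
  monic_X_pow_sub_C _ hd.ne'

theorem binForm_eval_line (d : ℕ) (μ ζ : k) :
    (binForm d μ).eval (C ζ * X) = C (ζ ^ d - μ) * X ^ d := by
  simp [binForm]
  ring

/-- A polynomial vanishing on each of the lines `u = ζ v` with `ζ ^ d = μ` is divisible by
`u ^ d - μ v ^ d`. -/
theorem binForm_dvd [IsAlgClosed k] {d : ℕ} (hd : (d : k) ≠ 0) {μ : k} (hμ : μ ≠ 0)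
    {a : k[X][X]} (ha : ∀ ζ : k, ζ ^ d = μ → a.eval (C ζ * X) = 0) : binForm d μ ∣ a := by
  have hd0 : 0 < d := Nat.pos_of_ne_zero (by rintro rfl; simp at hd)
  have hmon := binForm_monic hd0 μ
  obtain ⟨ζ, hinj, hζ⟩ := exists_roots hd hμ
  rw [← modByMonic_eq_zero_iff_dvd hmon]
  refine eq_zero_of_natDegree_lt_card_of_eval_eq_zero _ (lines_injective hinj) (fun i => ?_) ?_
  · have h1 := ha _ (hζ i)
    rw [← modByMonic_add_div a (binForm d μ), eval_add, eval_mul, binForm_eval_line, hζ i] at h1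
    simpa using h1
  · rw [Fintype.card_fin]
    refine (natDegree_modByMonic_lt a hmon ?_).trans_eq (natDegree_X_pow_sub_C)
    intro h
    have := congrArg natDegree h
    rw [binForm, natDegree_X_pow_sub_C, natDegree_one] at this
    omega

theorem binForm_radical [IsAlgClosed k] {d : ℕ} (hd : (d : k) ≠ 0) {μ : k} (hμ : μ ≠ 0)
    (b : k[X][X]) (n : ℕ) (hb : binForm d μ ∣ b ^ n) : binForm d μ ∣ b := by
  refine binForm_dvd hd hμ fun ζ hζ => ?_
  obtain ⟨c, hc⟩ := hb
  have := congrArg (eval (C ζ * X)) hc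
  rw [eval_pow, eval_mul, binForm_eval_line, hζ, sub_self, C_0, zero_mul, zero_mul] at this
  exact eq_zero_of_pow_eq_zero this

variable (k) in
/-- The coordinate ring `k[u, v, w] / (w ^ d - u ^ d + v ^ d)`, as a cyclic cover of the plane. -/
abbrev FermatRing (d : ℕ) : Type := AdjoinRoot (X ^ d - C (binForm d 1) : k[X][X][X])

/-- The branch divisor of the second cyclic cover is reduced: an element is divisible by
`u ^ d - lam * v ^ d` as soon as it vanishes on all the lines `u = ζ v`, `w = ξ v` with
`ζ ^ d = lam` and `ξ ^ d = lam - 1`. -/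
theorem binForm_radical_cover [IsAlgClosed k] {d : ℕ} (hd : (d : k) ≠ 0) {lam : k} (h0 : lam ≠ 0)
    (h1 : lam ≠ 1) (b : FermatRing k d) (n : ℕ)
    (hb : AdjoinRoot.of _ (binForm d lam) ∣ b ^ n) : AdjoinRoot.of _ (binForm d lam) ∣ b := by
  have hd0 : 0 < d := Nat.pos_of_ne_zero (by rintro rfl; simp at hd)
  have hmon : (X ^ d - C (binForm d 1) : k[X][X][X]).Monic := monic_X_pow_sub_C _ hd0.ne'
  obtain ⟨g, hg⟩ := AdjoinRoot.mk_surjective b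
  obtain ⟨g, hdeg, rfl⟩ : ∃ g : k[X][X][X], g.natDegree < d ∧ AdjoinRoot.mk _ g = b := by
    refine ⟨g %ₘ (X ^ d - C (binForm d 1)), ?_, ?_⟩
    · refine (natDegree_modByMonic_lt g hmon ?_).trans_eq (natDegree_X_pow_sub_C)
      intro h
      have := congrArg natDegree h
      rw [natDegree_X_pow_sub_C, natDegree_one] at this
      omega
    · rw [← hg, AdjoinRoot.mk_eq_mk, modByMonic_eq_sub_mul_div]
      exact ⟨-(g /ₘ (X ^ d - C (binForm d 1))), by ring⟩
  have hcoef : C (binForm d lam) ∣ g := by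
    rw [C_dvd_iff_dvd_coeff]
    intro j
    refine binForm_dvd hd h0 fun ζ hζ => ?_
    let ev : k[X][X] →+* k[X] := evalRingHom (C ζ * X)
    suffices h : g.map ev = 0 by
      have := congrArg (fun q => q.coeff j) h
      simpa [coeff_map, ev] using this
    obtain ⟨ξ, hinj, hξ⟩ := exists_roots hd (sub_ne_zero.2 h1)
    refine eq_zero_of_natDegree_lt_card_of_eval_eq_zero _ (lines_injective hinj) (fun i => ?_)
      (by rw [Fintype.card_fin]; exact natDegree_map_le.trans_lt hdeg)
    let ψ : FermatRing k d →+* k[X] := AdjoinRoot.lift ev (C (ξ i) * X) (by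
      rw [eval₂_sub, eval₂_X_pow, eval₂_C, coe_evalRingHom, binForm_eval_line, hζ, mul_pow, ← C_pow,
        hξ i, sub_self])
    have hψ : ψ (AdjoinRoot.mk _ g) = eval (C (ξ i) * X) (g.map ev) := by
      rw [AdjoinRoot.lift_mk, eval_map]
    rw [← hψ]
    obtain ⟨c, hc⟩ := hb
    have := congrArg ψ hc
    rw [map_pow, map_mul, AdjoinRoot.lift_of, coe_evalRingHom, binForm_eval_line, hζ, sub_self,
      C_0, zero_mul, zero_mul] at this
    exact eq_zero_of_pow_eq_zero this
  rw [← AdjoinRoot.mk_C]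
  exact map_dvd _ hcoef

theorem fermatRing_normal [IsAlgClosed k] {d : ℕ} (hd : (d : k) ≠ 0) :
    IsDomain (FermatRing k d) ∧ IsIntegrallyClosed (FermatRing k d) := by
  have hd0 : 0 < d := Nat.pos_of_ne_zero (by rintro rfl; simp at hd)
  let φ : k[X][X] →+* TrivSqZeroExt k k :=
    eval₂RingHom (eval₂RingHom (TrivSqZeroExt.inlHom k k) 1)
      (TrivSqZeroExt.inl 1 + TrivSqZeroExt.inr 1)
  have hφ : φ (binForm d 1) = (TrivSqZeroExt.inl 1 + TrivSqZeroExt.inr 1) ^ d - 1 := by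
    simp [φ, binForm, eval₂_pow]
  refine cyclicCover_normal φ ?_ ?_ hd0 ?_ (binForm_radical hd one_ne_zero)
  · rw [hφ]; simp
  · rw [hφ]; simpa using hd
  · have := (IsUnit.mk0 _ hd).map (algebraMap k k[X][X])
    rwa [map_natCast] at this

variable (k) in
/-- The coordinate ring
`k[u, v, w, s] / (w ^ d - u ^ d + v ^ d, s ^ d - u ^ d + lam * v ^ d)`. -/
abbrev ConeRing (d : ℕ) (lam : k) : Type :=
  AdjoinRoot (X ^ d - C (AdjoinRoot.of (X ^ d - C (binForm d 1)) (binForm d lam)) :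
    (FermatRing k d)[X])

theorem coneRing_normal [IsAlgClosed k] {d : ℕ} (hd : (d : k) ≠ 0) {lam : k} (h0 : lam ≠ 0)
    (h1 : lam ≠ 1) : IsDomain (ConeRing k d lam) ∧ IsIntegrallyClosed (ConeRing k d lam) := by
  have hd0 : 0 < d := Nat.pos_of_ne_zero (by rintro rfl; simp at hd)
  obtain ⟨_, _⟩ := fermatRing_normal hd
  obtain ⟨ζ, hζ⟩ := IsAlgClosed.exists_pow_nat_eq lam hd0
  obtain ⟨ξ, hξ⟩ := IsAlgClosed.exists_pow_nat_eq (lam - 1) hd0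
  have hζ0 : ζ ≠ 0 := by rintro rfl; rw [zero_pow hd0.ne'] at hζ; exact h0 hζ.symm
  have hξ0 : ξ ≠ 0 := by
    rintro rfl
    rw [zero_pow hd0.ne'] at hξ
    exact h1 (sub_eq_zero.1 hξ.symm)
  let φ₀ : k[X][X] →+* TrivSqZeroExt k k :=
    eval₂RingHom (eval₂RingHom (TrivSqZeroExt.inlHom k k) 1)
      (TrivSqZeroExt.inl ζ + TrivSqZeroExt.inr 1)
  have hφ₀ : ∀ μ, φ₀ (binForm d μ) =
      (TrivSqZeroExt.inl ζ + TrivSqZeroExt.inr 1) ^ d - TrivSqZeroExt.inl μ := by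
    intro μ
    simp [φ₀, binForm, eval₂_pow]
  let φ : FermatRing k d →+* TrivSqZeroExt k k :=
    AdjoinRoot.lift φ₀ (TrivSqZeroExt.inl ξ + TrivSqZeroExt.inr ((ζ / ξ) ^ (d - 1))) (by
      rw [eval₂_sub, eval₂_X_pow, eval₂_C, hφ₀]
      ext
      · simp [hζ, hξ]
      · simp only [TrivSqZeroExt.snd_sub, TrivSqZeroExt.snd_pow, TrivSqZeroExt.fst_add,
          TrivSqZeroExt.snd_add, TrivSqZeroExt.fst_inl, TrivSqZeroExt.snd_inl,
          TrivSqZeroExt.fst_inr, TrivSqZeroExt.snd_inr, TrivSqZeroExt.snd_zero, add_zero, zero_add,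
          smul_eq_mul, sub_zero, mul_one, Nat.pred_eq_sub_one]
        rw [← mul_pow, show ξ * (ζ / ξ) = ζ by field_simp, sub_self])
  have hφ : φ (AdjoinRoot.of _ (binForm d lam)) =
      (TrivSqZeroExt.inl ζ + TrivSqZeroExt.inr 1) ^ d - TrivSqZeroExt.inl lam := by
    rw [AdjoinRoot.lift_of, hφ₀]
  refine cyclicCover_normal φ ?_ ?_ hd0 ?_ (binForm_radical_cover hd h0 h1)
  · rw [hφ]; simp [hζ]
  · rw [hφ]; simpa using ⟨hd, fun h => absurd h hζ0⟩
  · have := (IsUnit.mk0 _ hd).map (algebraMap k (FermatRing k d))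
    rwa [map_natCast] at this

end Ring
end FThresholdDCC

/-! ### Monomial basis and dimension of the cone -/

namespace FThresholdDCC
open Polynomial

section Cone

theorem exists_cover_basis {B : Type*} [CommRing B] [Nontrivial B] (h : B) {d : ℕ} (hd : 0 < d) :
    ∃ bas : Module.Basis (Fin d) B (AdjoinRoot (X ^ d - C h : B[X])),
      ∀ i, bas i = AdjoinRoot.root _ ^ (i : ℕ) := by
  have hmon : (X ^ d - C h : B[X]).Monic := monic_X_pow_sub_C h hd.ne'
  refine ⟨(AdjoinRoot.powerBasis' hmon).basis.reindex
    (finCongr (natDegree_X_pow_sub_C (n := d) (r := h))), fun i => ?_⟩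
  rw [Module.Basis.reindex_apply, PowerBasis.basis_eq_pow, AdjoinRoot.powerBasis'_gen]
  rfl

variable {k : Type} [Field k] {d : ℕ} {lam : k}

/-- The coordinate `u` of the cone. -/
noncomputable def coneU (k : Type) [Field k] (d : ℕ) (lam : k) : ConeRing k d lam :=
  AdjoinRoot.of _ (AdjoinRoot.of _ X)

/-- The coordinate `v` of the cone. -/
noncomputable def coneV (k : Type) [Field k] (d : ℕ) (lam : k) : ConeRing k d lam :=
  AdjoinRoot.of _ (AdjoinRoot.of _ (C X))

/-- The coordinate `w` of the cone. -/
noncomputable def coneW (k : Type) [Field k] (d : ℕ) (lam : k) : ConeRing k d lam :=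
  AdjoinRoot.of _ (AdjoinRoot.root _)

/-- The coordinate `s` of the cone. -/
noncomputable def coneS (k : Type) [Field k] (d : ℕ) (lam : k) : ConeRing k d lam :=
  AdjoinRoot.root _

theorem root_pow {B : Type*} [CommRing B] (h : B) (d : ℕ) :
    AdjoinRoot.root (X ^ d - C h : B[X]) ^ d = AdjoinRoot.of _ h := by
  have := AdjoinRoot.eval₂_root (X ^ d - C h : B[X])
  rwa [eval₂_sub, eval₂_X_pow, eval₂_C, sub_eq_zero] at this

theorem of_binForm (μ : k) : (AdjoinRoot.of _ (AdjoinRoot.of _ (binForm d μ)) : ConeRing k d lam) =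
    coneU k d lam ^ d - algebraMap k _ μ * coneV k d lam ^ d := by
  have h : binForm d μ = X ^ d - C (C μ) * C X ^ d := by rw [binForm, C_mul, C_pow]
  let ι : k[X][X] →+* ConeRing k d lam := (AdjoinRoot.of _).comp (AdjoinRoot.of _)
  change ι (binForm d μ) = ι X ^ d - ι (C (C μ)) * ι (C X) ^ d
  rw [h, map_sub, map_mul, map_pow, map_pow]

theorem coneW_pow : coneW k d lam ^ d = coneU k d lam ^ d - coneV k d lam ^ d := by
  have := of_binForm (d := d) (lam := lam) (1 : k)
  rw [map_one, one_mul] at this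
  rw [← this, ← root_pow, map_pow]
  rfl

theorem coneS_pow :
    coneS k d lam ^ d = coneU k d lam ^ d - algebraMap k _ lam * coneV k d lam ^ d := by
  rw [← of_binForm, ← root_pow]
  rfl

/-- The universal property of the cone ring. -/
theorem exists_coneHom {S : Type} [CommRing S] [Algebra k S] (u v w s : S)
    (hw : w ^ d = u ^ d - v ^ d) (hs : s ^ d = u ^ d - algebraMap k S lam * v ^ d) :
    ∃ ρ : ConeRing k d lam →ₐ[k] S, ρ (coneU k d lam) = u ∧ ρ (coneV k d lam) = v ∧
      ρ (coneW k d lam) = w ∧ ρ (coneS k d lam) = s := by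
  let ρ₀ : k[X][X] →ₐ[k] S := eval₂AlgHom (aeval v) u (fun _ => Commute.all _ _)
  have hρ₀ : ∀ μ, ρ₀ (binForm d μ) = u ^ d - algebraMap k S μ * v ^ d := by
    intro μ
    simp [ρ₀, binForm, eval₂_pow]
  let ρ₁ : FermatRing k d →ₐ[k] S := AdjoinRoot.liftAlgHom _ ρ₀ w (by
    rw [eval₂_sub, eval₂_X_pow, eval₂_C]
    change w ^ d - ρ₀ _ = 0
    rw [hρ₀, hw]
    simp)
  let ρ : ConeRing k d lam →ₐ[k] S := AdjoinRoot.liftAlgHom _ ρ₁ s (by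
    rw [eval₂_sub, eval₂_X_pow, eval₂_C]
    change s ^ d - ρ₁ _ = 0
    rw [AdjoinRoot.liftAlgHom_of, hρ₀, hs, sub_self])
  refine ⟨ρ, ?_, ?_, ?_, ?_⟩
  · rw [coneU, AdjoinRoot.liftAlgHom_of, AdjoinRoot.liftAlgHom_of]
    simp [ρ₀]
  · rw [coneV, AdjoinRoot.liftAlgHom_of, AdjoinRoot.liftAlgHom_of]
    simp [ρ₀]
  · rw [coneW, AdjoinRoot.liftAlgHom_of, AdjoinRoot.liftAlgHom_root]
  · rw [coneS, AdjoinRoot.liftAlgHom_root]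

theorem exists_coneBasis_plane (hd : 0 < d) :
    ∃ bas : Module.Basis (Fin d × Fin d) k[X][X] (ConeRing k d lam),
      ∀ i, bas i = coneW k d lam ^ (i.1 : ℕ) * coneS k d lam ^ (i.2 : ℕ) := by
  obtain ⟨b₁, hb₁⟩ := exists_cover_basis (binForm d (1 : k)) hd
  have : Nontrivial (FermatRing k d) := by
    have : Nonempty (Fin d) := ⟨⟨0, hd⟩⟩
    exact b₁.repr.toEquiv.nontrivial
  obtain ⟨b₂, hb₂⟩ := exists_cover_basis
    (AdjoinRoot.of (X ^ d - C (binForm d 1)) (binForm d lam)) hd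
  refine ⟨b₁.smulTower b₂, fun i => ?_⟩
  rw [Module.Basis.smulTower_apply, hb₁, hb₂, Algebra.smul_def, map_pow]
  rfl

theorem exists_coneBasis (hd : 0 < d) :
    ∃ bas : Module.Basis ((ℕ × ℕ) × (Fin d × Fin d)) k (ConeRing k d lam),
      ∀ i, bas i = (coneV k d lam ^ i.1.1 * coneU k d lam ^ i.1.2) *
        (coneW k d lam ^ (i.2.1 : ℕ) * coneS k d lam ^ (i.2.2 : ℕ)) := by
  obtain ⟨b, hb⟩ := exists_coneBasis_plane (lam := lam) hd
  let a : Module.Basis (ℕ × ℕ) k k[X][X] := (basisMonomials k).smulTower (basisMonomials k[X])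
  refine ⟨a.smulTower b, fun i => ?_⟩
  rw [Module.Basis.smulTower_apply, hb, Algebra.smul_def]
  congr 1
  rw [Module.Basis.smulTower_apply]
  simp only [coe_basisMonomials, smul_monomial, smul_eq_mul, mul_one]
  rw [← C_mul_X_pow_eq_monomial, ← C_mul_X_pow_eq_monomial, C_1, one_mul, map_mul, map_pow, map_pow,
    map_pow]
  rfl

/-- `u, v` is a regular sequence on the cone, which is free over `k[v][u]`. -/
theorem cone_regular (hd : 0 < d) (N : ℕ) (a b : ConeRing k d lam)
    (hab : a * coneV k d lam ^ N = b * coneU k d lam ^ N) : coneV k d lam ^ N ∣ b := by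
  obtain ⟨bas, -⟩ := exists_coneBasis_plane (lam := lam) hd
  have hV : ∀ x : ConeRing k d lam, x * coneV k d lam ^ N = (C (X ^ N) : k[X][X]) • x := by
    intro x
    refine Eq.trans ?_ (Algebra.smul_def (R := k[X][X]) (A := ConeRing k d lam) _ _).symm
    rw [mul_comm, C_pow, map_pow]
    rfl
  have hU : ∀ x : ConeRing k d lam, x * coneU k d lam ^ N = (X ^ N : k[X][X]) • x := by
    intro x
    refine Eq.trans ?_ (Algebra.smul_def (R := k[X][X]) (A := ConeRing k d lam) _ _).symm
    rw [mul_comm, map_pow]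
    rfl
  rw [hV, hU] at hab
  have hdvd : ∀ i, C (X ^ N) ∣ bas.repr b i := by
    intro i
    have h1 := congrArg (fun x => bas.repr x i) hab
    simp only [map_smul, Finsupp.smul_apply, smul_eq_mul] at h1
    rw [C_dvd_iff_dvd_coeff]
    intro j
    have h2 := congrArg (fun q => q.coeff (j + N)) h1
    simp only [coeff_C_mul, mul_comm (X ^ N : k[X][X]), coeff_mul_X_pow] at h2
    exact ⟨_, h2.symm⟩
  choose c hc using hdvd
  refine ⟨∑ i, c i • bas i, ?_⟩
  rw [mul_comm, hV, Finset.smul_sum, ← bas.sum_repr b]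
  refine Finset.sum_congr rfl fun i _ => ?_
  rw [smul_smul, ← hc]

theorem cone_ringKrullDim [IsAlgClosed k] [IsDomain (ConeRing k d lam)] (hd : 0 < d) :
    ringKrullDim (ConeRing k d lam) = 2 := by
  obtain ⟨bas, -⟩ := exists_coneBasis_plane (lam := lam) hd
  have hfin : Module.Finite k[X][X] (ConeRing k d lam) := .of_basis bas
  apply le_antisymm
  · have h1 : ringKrullDim k[X][X] = 2 := by
      rw [Polynomial.ringKrullDim_of_isNoetherianRing, Polynomial.ringKrullDim_of_isNoetherianRing,
        ringKrullDim_eq_zero_of_field]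
      rfl
    rw [← h1]
    refine Order.krullDim_le_of_strictMono
      (fun P => PrimeSpectrum.comap (algebraMap k[X][X] (ConeRing k d lam)) P) ?_
    intro P Q hPQ
    exact Ideal.IsIntegral.comap_lt_comap (R := k[X][X]) hPQ
  · obtain ⟨γ, hγ⟩ := IsAlgClosed.exists_pow_nat_eq (1 - lam) hd
    obtain ⟨ρ, hu, hv, -, -⟩ := exists_coneHom (k := k) (d := d) (lam := lam) (S := k[X])
      X X 0 (C γ * X) (by rw [zero_pow hd.ne', sub_self]) (by
        rw [mul_pow, ← C_pow, hγ, C_sub, C_1, algebraMap_eq]; ring)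
    let P₁ : PrimeSpectrum (ConeRing k d lam) := ⟨RingHom.ker ρ, RingHom.ker_isPrime ρ⟩
    let P₂ : PrimeSpectrum (ConeRing k d lam) :=
      ⟨RingHom.ker ((constantCoeff : k[X] →+* k).comp ρ.toRingHom), RingHom.ker_isPrime _⟩
    have hinj : Function.Injective (algebraMap k[X][X] (ConeRing k d lam)) := by
      have : Nonempty (Fin d × Fin d) := ⟨⟨⟨0, hd⟩, ⟨0, hd⟩⟩⟩
      have := Module.Free.of_basis bas
      exact FaithfulSMul.algebraMap_injective _ _
    have hne : coneU k d lam - coneV k d lam ≠ 0 := by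
      have : coneU k d lam - coneV k d lam = algebraMap k[X][X] _ (X - C X) := by
        rw [map_sub]; rfl
      rw [this, Ne, map_eq_zero_iff _ hinj]
      exact X_sub_C_ne_zero _
    have h01 : (⊥ : PrimeSpectrum (ConeRing k d lam)) < P₁ := by
      rw [bot_lt_iff_ne_bot]
      intro h
      have h1 : coneU k d lam - coneV k d lam ∈ P₁.asIdeal := by
        change ρ _ = 0
        rw [map_sub, hu, hv, sub_self]
      rw [h] at h1
      exact hne h1
    have h12 : P₁ < P₂ := by
      refine lt_of_le_of_ne (fun x hx => ?_) fun h => ?_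
      · change constantCoeff (ρ x) = 0
        rw [show ρ x = 0 from hx, map_zero]
      · have h1 : coneV k d lam ∈ P₂.asIdeal := by
          change constantCoeff (ρ _) = 0
          rw [hv]
          simp
        rw [← h] at h1
        have h2 : ρ (coneV k d lam) = 0 := h1
        rw [hv] at h2
        exact X_ne_zero h2
    let σ : LTSeries (PrimeSpectrum (ConeRing k d lam)) :=
      ⟨2, ![⊥, P₁, P₂], fun i => by fin_cases i <;> [exact h01; exact h12]⟩
    exact Order.LTSeries.length_le_krullDim σ

end Cone
end FThresholdDCC

/-! ### The grading and the Hilbert function of the cone -/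

namespace FThresholdDCC
open Polynomial

section Hilbert

/-- The total degree of the basis element `v ^ a * u ^ b * w ^ i * s ^ j`. -/
def coneDeg {d : ℕ} (x : (ℕ × ℕ) × (Fin d × Fin d)) : ℕ :=
  x.1.1 + x.1.2 + (x.2.1 + x.2.2)

instance finite_coneDeg {d : ℕ} (n : ℕ) :
    Finite {x : (ℕ × ℕ) × (Fin d × Fin d) // coneDeg x = n} := by
  refine Finite.of_injective (β := (Fin (n + 1) × Fin (n + 1)) × (Fin d × Fin d))
    (fun x => ((⟨x.1.1.1, ?_⟩, ⟨x.1.1.2, ?_⟩), x.1.2)) ?_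
  · have := x.2; simp only [coneDeg] at this; omega
  · have := x.2; simp only [coneDeg] at this; omega
  · rintro ⟨⟨⟨a, b⟩, c⟩, h⟩ ⟨⟨⟨a', b'⟩, c'⟩, h'⟩ heq
    simp only [Prod.mk.injEq, Fin.mk.injEq] at heq
    obtain ⟨⟨rfl, rfl⟩, rfl⟩ := heq
    rfl

/-- The Hilbert function of the cone in large degrees: each `w ^ i * s ^ j` contributes the
`n - i - j + 1` monomials of degree `n - i - j` in `u`, `v`. -/
theorem card_coneDeg {d : ℕ} (n : ℕ) (hn : 2 * d ≤ n) :
    (Nat.card {x : (ℕ × ℕ) × (Fin d × Fin d) // coneDeg x = n} : ℤ) =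
      (d : ℤ) ^ 2 * n + ∑ c : Fin d × Fin d, (1 - (c.1 : ℤ) - (c.2 : ℤ)) := by
  let e : {x : (ℕ × ℕ) × (Fin d × Fin d) // coneDeg x = n} ≃
      Σ c : Fin d × Fin d,
        {ab : ℕ × ℕ // ab ∈
          Finset.HasAntidiagonal.antidiagonal (n - ((c.1 : ℕ) + (c.2 : ℕ)))} :=
    { toFun := fun x => ⟨x.1.2, x.1.1, by
        have := x.2
        simp only [coneDeg] at this
        rw [Finset.HasAntidiagonal.mem_antidiagonal]
        omega⟩
      invFun := fun y => ⟨(y.2.1, y.1), by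
        have := Finset.HasAntidiagonal.mem_antidiagonal.1 y.2.2
        have h1 := y.1.1.2
        have h2 := y.1.2.2
        simp only [coneDeg]
        omega⟩
      left_inv := fun x => rfl
      right_inv := fun y => rfl }
  rw [Nat.card_congr e, Nat.card_sigma]
  have hfib : ∀ c : Fin d × Fin d,
      ((Nat.card {ab : ℕ × ℕ // ab ∈
        Finset.HasAntidiagonal.antidiagonal (n - ((c.1 : ℕ) + (c.2 : ℕ)))} : ℕ) : ℤ) =
        n + (1 - (c.1 : ℤ) - (c.2 : ℤ)) := by
    intro c
    have h1 := c.1.2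
    have h2 := c.2.2
    rw [Nat.card_eq_fintype_card, Fintype.card_coe, Finset.Nat.card_antidiagonal]
    omega
  push_cast
  rw [Finset.sum_congr rfl fun c _ => hfib c, Finset.sum_add_distrib]
  simp [pow_two]

end Hilbert

theorem scaled_relations {k R : Type} [Field k] [CommRing R] [Algebra k R] {lam : k} {d : ℕ}
    {u v w s : R} (hwd : w ^ d = u ^ d - v ^ d) (hsd : s ^ d = u ^ d - algebraMap k R lam * v ^ d) :
    (C w * X : R[X]) ^ d = (C u * X) ^ d - (C v * X) ^ d ∧
      (C s * X : R[X]) ^ d = (C u * X) ^ d - algebraMap k R[X] lam * (C v * X) ^ d := by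
  constructor
  · simp only [mul_pow, ← C_pow, hwd, C_sub]
    ring
  · simp only [mul_pow, ← C_pow, hsd, C_sub, C_mul]
    rw [IsScalarTower.algebraMap_apply k R R[X], algebraMap_eq]
    ring

/-- The grading of a ring with coordinates `u, v, w, s`, a coaction scaling them, and the basis of
normal monomials `v ^ a * u ^ b * w ^ i * s ^ j` with `i, j < d`. -/
theorem exists_grading {k R : Type} [Field k] [CommRing R] [IsDomain R] [Algebra k R] {p : ℕ}
    (hp : 0 < p) {lam : k} {u v w s : R}
    (bas : Module.Basis ((ℕ × ℕ) × (Fin (p + 1) × Fin (p + 1))) k R)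
    (hbas : ∀ i, bas i = (v ^ i.1.1 * u ^ i.1.2) * (w ^ (i.2.1 : ℕ) * s ^ (i.2.2 : ℕ)))
    (hwd : w ^ (p + 1) = u ^ (p + 1) - v ^ (p + 1))
    (hsd : s ^ (p + 1) = u ^ (p + 1) - algebraMap k R lam * v ^ (p + 1))
    (hreg : ∀ N a b, a * v ^ N = b * u ^ N → v ^ N ∣ b)
    (ρ : R →ₐ[k] R[X]) (hu : ρ u = C u * X) (hv : ρ v = C v * X) (hw : ρ w = C w * X)
    (hs : ρ s = C s * X) :
    ∃ (𝒜 : ℕ → Submodule k R) (_ : GradedAlgebra 𝒜), 𝒜 0 = 1 ∧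
      Algebra.adjoin k (𝒜 1 : Set R) = ⊤ ∧ (∀ n, Module.Finite k (𝒜 n)) ∧
      (∃ h : ℤ, ∀ n ≥ 2 * (p + 1),
        (Module.finrank k (𝒜 n) : ℤ) = ((p + 1 : ℕ) : ℤ) ^ 2 * n + h) ∧
      ConeForms 𝒜 p lam u v w s ∧
      ∀ P : Ideal R, u ∈ P → v ∈ P → w ∈ P → s ∈ P → (𝒜 1 : Set R) ⊆ P := by
  have hρ : ∀ i, ρ (bas i) = monomial (coneDeg i) (bas i) := by
    intro i
    rw [hbas, map_mul, map_mul, map_mul, map_pow, map_pow, map_pow, map_pow, hu, hv, hw, hs,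
      ← C_mul_X_pow_eq_monomial]
    simp only [coneDeg, C_mul, C_pow]
    ring
  have h1mem : ∀ x : R, ρ x = C x * X → x ∈ weightSpace ρ 1 := by
    intro x hx
    rw [mem_weightSpace, hx, ← C_mul_X_pow_eq_monomial, pow_one]
  have hu0 : u ≠ 0 := by
    simpa [hbas] using bas.ne_zero ((0, 1), (⟨0, by omega⟩, ⟨0, by omega⟩))
  have hv0 : v ≠ 0 := by
    simpa [hbas] using bas.ne_zero ((1, 0), (⟨0, by omega⟩, ⟨0, by omega⟩))
  have hw0 : w ≠ 0 := by
    simpa [hbas] using bas.ne_zero ((0, 0), (⟨1, by omega⟩, ⟨0, by omega⟩))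
  have hs0 : s ≠ 0 := by
    simpa [hbas] using bas.ne_zero ((0, 0), (⟨0, by omega⟩, ⟨1, by omega⟩))
  refine ⟨weightSpace ρ, weightGrading ρ bas coneDeg hρ, ?_, ?_, ?_, ?_, ?_, ?_⟩
  · rw [weightSpace_eq_span ρ bas coneDeg hρ, Submodule.one_eq_span]
    congr 1
    ext x
    constructor
    · rintro ⟨⟨⟨⟨a, b⟩, ⟨i, hi⟩, ⟨j, hj⟩⟩, hx⟩, rfl⟩
      simp only [coneDeg] at hx
      obtain rfl : a = 0 := by omega
      obtain rfl : b = 0 := by omega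
      obtain rfl : i = 0 := by omega
      obtain rfl : j = 0 := by omega
      simp [hbas]
    · rintro rfl
      exact ⟨⟨((0, 0), (⟨0, Nat.succ_pos p⟩, ⟨0, Nat.succ_pos p⟩)), rfl⟩, by simp [hbas]⟩
  · rw [eq_top_iff]
    intro x _
    have hx : x ∈ Submodule.span k (Set.range bas) := by rw [bas.span_eq]; trivial
    have hle : Submodule.span k (Set.range bas) ≤
        Subalgebra.toSubmodule (Algebra.adjoin k (weightSpace ρ 1 : Set (R))) := by
      rw [Submodule.span_le]
      rintro _ ⟨i, rfl⟩
      rw [hbas]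
      have hsub := Algebra.subset_adjoin (R := k) (s := (weightSpace ρ 1 : Set (R)))
      change _ ∈ Algebra.adjoin k (weightSpace ρ 1 : Set R)
      exact mul_mem (mul_mem (pow_mem (hsub (h1mem _ hv)) _) (pow_mem (hsub (h1mem _ hu)) _))
        (mul_mem (pow_mem (hsub (h1mem _ hw)) _) (pow_mem (hsub (h1mem _ hs)) _))
    exact hle hx
  · intro n
    exact finite_weightSpace ρ bas coneDeg hρ n
  · refine ⟨∑ c : Fin (p + 1) × Fin (p + 1), (1 - (c.1 : ℤ) - (c.2 : ℤ)), fun n hn => ?_⟩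
    have := Fintype.ofFinite {x : (ℕ × ℕ) × (Fin (p + 1) × Fin (p + 1)) // coneDeg x = n}
    rw [finrank_weightSpace ρ bas coneDeg hρ, ← Nat.card_eq_fintype_card, card_coneDeg n hn]
  · exact ⟨h1mem _ hu, h1mem _ hv, h1mem _ hw, h1mem _ hs, hu0, hv0, hw0, hs0, hwd, hsd, hreg⟩
  · intro P hPu hPv hPw hPs x hx
    have hle : weightSpace ρ 1 ≤ P.restrictScalars k := by
      rw [weightSpace_eq_span ρ bas coneDeg hρ, Submodule.span_le]
      rintro _ ⟨⟨⟨⟨a, b⟩, i, j⟩, hx⟩, rfl⟩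
      simp only [coneDeg] at hx
      change bas _ ∈ P
      rw [hbas]
      rcases (show 0 < a ∨ 0 < b ∨ 0 < (i : ℕ) ∨ 0 < (j : ℕ) by omega) with h | h | h | h
      · exact P.mul_mem_right _ (P.mul_mem_right _ (P.pow_mem_of_mem hPv _ h))
      · exact P.mul_mem_right _ (P.mul_mem_left _ (P.pow_mem_of_mem hPu _ h))
      · exact P.mul_mem_left _ (P.mul_mem_right _ (P.pow_mem_of_mem hPw _ h))
      · exact P.mul_mem_left _ (P.mul_mem_left _ (P.pow_mem_of_mem hPs _ h))
    exact hle hx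

/-- The cone over the smooth complete intersection
`w ^ (p + 1) = u ^ (p + 1) - v ^ (p + 1)`, `s ^ (p + 1) = u ^ (p + 1) - lam * v ^ (p + 1)`. -/
theorem exists_cone (p : ℕ) [Fact p.Prime] (k : Type) [Field k] [IsAlgClosed k] [CharP k p]
    (lam : k) (h0 : lam ≠ 0) (h1 : lam ≠ 1) :
    ∃ (R : Type) (_ : CommRing R) (_ : IsDomain R) (_ : Algebra k R) (𝒜 : ℕ → Submodule k R)
      (_ : GradedAlgebra 𝒜) (u v w s : R),
      IsIntegrallyClosed R ∧ ringKrullDim R = 2 ∧ 𝒜 0 = 1 ∧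
      Algebra.adjoin k (𝒜 1 : Set R) = ⊤ ∧ (∀ n, Module.Finite k (𝒜 n)) ∧
      (∃ h : ℤ, ∀ n ≥ 2 * (p + 1),
        (Module.finrank k (𝒜 n) : ℤ) = ((p + 1 : ℕ) : ℤ) ^ 2 * n + h) ∧
      ConeForms 𝒜 p lam u v w s ∧
      ∀ P : Ideal R, u ∈ P → v ∈ P → w ∈ P → s ∈ P → (𝒜 1 : Set R) ⊆ P := by
  have hp : 0 < p := (Fact.out : p.Prime).pos
  have hd0 : 0 < p + 1 := by omega
  have hdk : ((p + 1 : ℕ) : k) ≠ 0 := by simp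
  obtain ⟨hdom, hnorm⟩ := coneRing_normal hdk h0 h1
  obtain ⟨bas, hbas⟩ := exists_coneBasis (lam := lam) hd0
  have hwd := coneW_pow (k := k) (d := p + 1) (lam := lam)
  have hsd := coneS_pow (k := k) (d := p + 1) (lam := lam)
  obtain ⟨hwd', hsd'⟩ := scaled_relations hwd hsd
  obtain ⟨ρ, hu, hv, hw, hs⟩ := exists_coneHom _ _ _ _ hwd' hsd'
  obtain ⟨𝒜, hgr, h⟩ := exists_grading hp bas hbas hwd hsd (cone_regular hd0) ρ hu hv hw hs
  exact ⟨ConeRing k (p + 1) lam, inferInstance, hdom, inferInstance, 𝒜, hgr, _, _, _, _, hnorm,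
    cone_ringKrullDim hd0, h⟩

end FThresholdDCC

/-! ### The decreasing sequence of thresholds -/

namespace FThresholdDCC
open Polynomial

/-- The parameter is the variable of `𝔽_p(X)`, in an algebraic closure. -/
theorem exists_parameter (p : ℕ) [hp : Fact p.Prime] :
    ∃ (k : Type) (_ : Field k) (_ : IsAlgClosed k) (_ : CharP k p) (lam : k),
      lam ≠ 0 ∧ ∀ n : ℕ, lam ^ p ^ (n + 1) ≠ lam := by
  let K := FractionRing (ZMod p)[X]
  let φ : (ZMod p)[X] →+* AlgebraicClosure K :=
    (algebraMap K (AlgebraicClosure K)).comp (algebraMap (ZMod p)[X] K)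
  have hφ : Function.Injective φ :=
    (algebraMap K (AlgebraicClosure K)).injective.comp (IsFractionRing.injective _ _)
  have hch : CharP (AlgebraicClosure K) p := (RingHom.charP_iff φ hφ p).1 inferInstance
  refine ⟨AlgebraicClosure K, inferInstance, inferInstance, hch, φ X, ?_, fun n h => ?_⟩
  · exact (map_ne_zero_iff φ hφ).2 X_ne_zero
  · rw [← map_pow] at h
    have h1 := congrArg natDegree (hφ h)
    rw [natDegree_X_pow, natDegree_X] at h1
    exact (Nat.one_lt_pow (Nat.succ_ne_zero n) hp.out.one_lt).ne' h1

/-- The numerical model of bundles on a curve of genus `g`: a bundle is recorded by its rank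
(shifted by one) and its degree, and its space of sections has the dimension that a given function
`H` assigns to the multiple of the canonical degree `2 * g - 2` it represents. No subbundles and no
vanishing of first cohomology are recorded. -/
noncomputable def numericalTheory (p : ℕ) (k : Type) [Field k] (g : ℕ) (H : ℕ → ℕ) :
    CurveBundleTheory p k where
  Bundle := ℕ × ℤ
  genus := g
  rank V := V.1 + 1
  deg V := V.2
  Sub _ _ := False
  Quot V _ := V
  tensor V W := ((V.1 + 1) * (W.1 + 1) - 1, ((W.1 + 1 : ℕ) : ℤ) * V.2 + ((V.1 + 1 : ℕ) : ℤ) * W.2)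
  dual V := (V.1, -V.2)
  det V := (0, V.2)
  OX := (0, 0)
  KX := (0, 2 * (g : ℤ) - 2)
  Iso V W := V = W
  frob V := (V.1, p * V.2)
  h0 V := H (V.2 / (2 * (g : ℤ) - 2)).toNat
  H1zero _ := False
  globallyGenerated _ := True
  veryAmple _ := True
  rank_pos _ := Nat.succ_pos _
  rank_OX := rfl
  deg_OX := rfl
  rank_KX := rfl
  deg_KX := rfl
  rank_tensor V W := Nat.sub_add_cancel (Nat.mul_pos (Nat.succ_pos _) (Nat.succ_pos _))
  deg_tensor _ _ := rfl
  rank_dual _ := rfl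
  deg_dual _ := rfl
  rank_det _ := rfl
  deg_det _ := rfl
  rank_frob _ := rfl
  deg_frob _ := rfl
  sub_rank_lt _ _ h := h.elim
  rank_quot _ _ h := h.elim
  deg_quot _ _ h := h.elim
  iso_rank _ _ h := by rw [h]
  iso_deg _ _ h := by rw [h]
  riemannRoch _ h := h.elim

theorem tpow_KX (p : ℕ) (k : Type) [Field k] (g : ℕ) (H : ℕ → ℕ) (n : ℕ) :
    (numericalTheory p k g H).tpow (numericalTheory p k g H).KX n =
      ((0, n * (2 * (g : ℤ) - 2)) : ℕ × ℤ) := by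
  induction n with
  | zero => simp [CurveBundleTheory.tpow, numericalTheory]
  | succ n ih =>
    rw [CurveBundleTheory.tpow, ih]
    simp only [numericalTheory]
    ext
    · simp
    · push_cast; ring

theorem h0_tpow_KX (p : ℕ) (k : Type) [Field k] {g : ℕ} (hg : 1 < g) (H : ℕ → ℕ) (n : ℕ) :
    (numericalTheory p k g H).h0 ((numericalTheory p k g H).tpow (numericalTheory p k g H).KX n) =
      H n := by
  rw [tpow_KX]
  change H ((n * (2 * (g : ℤ) - 2)) / (2 * (g : ℤ) - 2)).toNat = H n
  rw [Int.mul_ediv_cancel _ (by omega), Int.toNat_natCast]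

theorem threshold_strictAnti {p : ℕ} (hp : p.Prime) :
    StrictAnti fun n : ℕ => (p : ℝ) + 2 + ((p : ℝ) - 1) / (p : ℝ) ^ (n + 1) := by
  have h1 : (1 : ℝ) < p := by exact_mod_cast hp.one_lt
  refine strictAnti_nat_of_succ_lt fun n => ?_
  have h2 : (p : ℝ) ^ (n + 1) < (p : ℝ) ^ (n + 1 + 1) := pow_lt_pow_right₀ h1 (Nat.lt_succ_self _)
  have h3 : (0 : ℝ) < (p : ℝ) ^ (n + 1) := by positivity
  have h4 : (0 : ℝ) < (p : ℝ) - 1 := by linarith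
  have := div_lt_div_of_pos_left h4 h3 h2
  linarith

/-- The ideal generated by `u * v ^ p`, `a * u ^ (p + 1) + b * v ^ (p + 1)` and `w * s` from
`relation_exists` realizes the `n`-th term of the sequence. -/
theorem exists_threshold {k R : Type} [Field k] [IsAlgClosed k] [CommRing R] [IsDomain R]
    [Algebra k R] (𝒜 : ℕ → Submodule k R) [GradedAlgebra 𝒜] [∀ n, Module.Finite k (𝒜 n)]
    {p : ℕ} [hp : Fact p.Prime] [CharP R p] {lam : k} {u v w s : R}
    (hstd : Algebra.adjoin k (𝒜 1 : Set R) = ⊤) {h : ℤ} {n0 : ℕ}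
    (hH : ∀ n ≥ n0, (Module.finrank k (𝒜 n) : ℤ) = ((p + 1 : ℕ) : ℤ) ^ 2 * n + h)
    (C : ConeForms 𝒜 p lam u v w s) (hlam0 : lam ≠ 0) (hlam : ∀ n : ℕ, lam ^ p ^ (n + 1) ≠ lam)
    (hone : ∀ P : Ideal R, u ∈ P → v ∈ P → w ∈ P → s ∈ P → (𝒜 1 : Set R) ⊆ P) (n : ℕ) :
    ∃ J : Ideal R, J ≤ (HomogeneousIdeal.irrelevant 𝒜).toIdeal ∧
      (HomogeneousIdeal.irrelevant 𝒜).toIdeal ≤ J.radical ∧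
      HasFThreshold p (HomogeneousIdeal.irrelevant 𝒜).toIdeal J
        ((p : ℝ) + 2 + ((p : ℝ) - 1) / (p : ℝ) ^ (n + 1)) := by
  obtain ⟨a, b, f, g, f', hf, hg, hf', hrel, hradb, hradF⟩ := relation_exists 𝒜 C hlam0 hlam n
  have hp1 := hp.out.one_lt
  have hpq : p ≤ p ^ (n + 1) := Nat.le_self_pow (Nat.succ_ne_zero n) p
  set q := p ^ (n + 1) with hq
  have hC : ∀ (c : k) {m : ℕ} {x : R}, x ∈ 𝒜 m → algebraMap k R c * x ∈ 𝒜 m := by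
    intro c m x hx
    rw [← Algebra.smul_def]
    exact (𝒜 m).smul_mem c hx
  have hpow : ∀ {x : R} (m : ℕ), x ∈ 𝒜 1 → x ^ m ∈ 𝒜 m := by
    intro x m hx
    simpa using SetLike.pow_mem_graded m hx
  let F : Fin 3 → R :=
    ![u * v ^ p, algebraMap k R a * u ^ (p + 1) + algebraMap k R b * v ^ (p + 1), w * s]
  let d : Fin 3 → ℕ := ![p + 1, p + 1, 2]
  have hsum : ∑ i, d i = 2 * p + 4 := by
    simp [d, Fin.sum_univ_three]; ring
  have hF : ∀ i, F i ∈ 𝒜 (d i) := by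
    intro i
    fin_cases i
    · change u * v ^ p ∈ 𝒜 (p + 1)
      rw [add_comm]
      exact SetLike.mul_mem_graded C.hu (hpow p C.hv)
    · exact add_mem (hC a (hpow _ C.hu)) (hC b (hpow _ C.hv))
    · exact SetLike.mul_mem_graded C.hw C.hs
  have hd0 : ∀ i, 0 < d i := by
    intro i
    fin_cases i <;> simp [d]
  have radF : ∀ P : Ideal R, P.IsPrime → (∀ i, F i ∈ P) → u ∈ P ∧ v ∈ P :=
    fun P hP hFP => hradF P hP (hFP 0) (hFP 2)
  refine ⟨Ideal.span (Set.range F), ?_, ?_, ?_⟩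
  · rw [Ideal.span_le]
    rintro _ ⟨i, rfl⟩
    exact HomogeneousIdeal.mem_irrelevant_of_mem 𝒜 (hd0 i) (hF i)
  · rw [irrelevant_eq_span_one 𝒜 hstd, Ideal.span_le]
    intro x hx
    refine mem_radical_of_primes fun P hP hle => ?_
    obtain ⟨hu, hv⟩ := radF P hP fun i => hle (Ideal.subset_span ⟨i, rfl⟩)
    have hu' := P.pow_mem_of_mem hu _ (Nat.succ_pos p)
    have hv' := P.pow_mem_of_mem hv _ (Nat.succ_pos p)
    refine hone P hu hv (hP.mem_of_pow_mem (p + 1) ?_) (hP.mem_of_pow_mem (p + 1) ?_) hx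
    · rw [C.rel_w]; exact sub_mem hu' hv'
    · rw [C.rel_s]; exact sub_mem hu' (P.mul_mem_left _ hv')
  · have hB : p - 1 ≤ q := by omega
    have hqp : q ≤ q * p := Nat.le_mul_of_pos_right _ hp.out.pos
    have e1 : q * (p + 2) - (p - 1) - q * (p + 1) = q - (p - 1) := by
      have : q * (p + 2) = q * (p + 1) + q := by ring
      omega
    have e2 : q * (p + 2) - (p - 1) - q * 2 = q * p - (p - 1) := by
      have : q * (p + 2) = q * p + q * 2 := by ring
      omega
    have key := hasFThreshold_of_relation 𝒜 hstd (e := ((p + 1 : ℕ) : ℤ) ^ 2) (by positivity) hH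
      C.v0 C.reg F ![f, g, f'] d (n + 1) (q * (p + 2) - (p - 1)) hF
      (mul_ne_zero C.u0 (pow_ne_zero _ C.v0)) ?_ ?_ ?_ radF ?_ ?_
    · convert key using 1
      rw [hsum, Nat.cast_sub (by nlinarith), Nat.cast_sub hp1.le, ← hq]
      have hq0 : (p : ℝ) ^ (n + 1) ≠ 0 := by
        have : (p : ℝ) ≠ 0 := by exact_mod_cast hp.out.ne_zero
        positivity
      have hqc : (q : ℝ) = (p : ℝ) ^ (n + 1) := by rw [hq]; push_cast; rfl
      push_cast
      rw [hqc]
      field_simp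
      ring
    · intro i
      rw [← hq]
      have h3 : q * (p + 2) = q * p + q * 2 := by ring
      have h4 : q * (p + 1) = q * p + q := by ring
      fin_cases i
      · change q * (p + 1) ≤ _
        omega
      · change q * (p + 1) ≤ _
        omega
      · change q * 2 ≤ _
        omega
    · intro i
      rw [← hq]
      fin_cases i
      · change f ∈ 𝒜 (_ - q * (p + 1))
        rwa [e1]
      · change g ∈ 𝒜 (_ - q * (p + 1))
        rwa [e1]
      · change f' ∈ 𝒜 (_ - q * 2)
        rwa [e2]
    · rw [Fin.sum_univ_three]
      exact hrel
    · exact fun P hP hb => hradb P hP (hb 0) (hb 1) (hb 2)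
    · rw [hsum, ← hq]
      have h3 : q * (2 * p + 4) = 2 * (q * (p + 2)) := by ring
      have h4 : 0 < q * (p + 2) := by positivity
      omega

end FThresholdDCC

theorem nondiscreteness_stmt2 (p g : ℕ) (hp : p.Prime) (hg : 1 < g) :
    Nonempty (DescendingChainWitness p g) := by
  haveI : Fact p.Prime := ⟨hp⟩
  obtain ⟨k, _, _, _, lam, hlam0, hlam⟩ := FThresholdDCC.exists_parameter p
  have hlam1 : lam ≠ 1 := by
    rintro rfl
    exact hlam 0 (one_pow _)
  obtain ⟨R, _, _, _, 𝒜, _, u, v, w, s, hnorm, hdim, h0, hstd, hfin, ⟨h, hH⟩, C, hone⟩ :=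
    FThresholdDCC.exists_cone p k lam hlam0 hlam1
  haveI : CharP R p := charP_of_injective_algebraMap (algebraMap k R).injective p
  exact ⟨{
    k := k
    R := R
    𝒜 := 𝒜
    standard_zero := h0
    standard_one := hstd
    normal := hnorm
    dim_two := hdim
    T := FThresholdDCC.numericalTheory p k g fun n => Module.finrank k (𝒜 n)
    L := (FThresholdDCC.numericalTheory p k g fun n => Module.finrank k (𝒜 n)).KX
    genus_eq := rfl
    cone := ⟨rfl, trivial, fun n =>
      (FThresholdDCC.h0_tpow_KX p k hg (fun n => Module.finrank k (𝒜 n)) n).symm⟩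
    qGorenstein := ⟨1, 1, one_pos, one_pos, rfl⟩
    mIdeal := (HomogeneousIdeal.irrelevant 𝒜).toIdeal
    mIdeal_eq := rfl
    seq := fun n : ℕ => (p : ℝ) + 2 + ((p : ℝ) - 1) / (p : ℝ) ^ (n + 1)
    seq_strictAnti := FThresholdDCC.threshold_strictAnti hp
    seq_is_fthreshold := FThresholdDCC.exists_threshold 𝒜 hstd hH C hlam0 hlam hone }⟩
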